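/- arXiv:1812.00963 — 6 statements merged into one kernel-verified Lean document; each statement's English description precedes it below -/
import Mathlib

section
/- For every N ≥ 3, the number of 321-avoiding permutations π of size N satisfying the condition 'letting j be the position of the value N in π, one has j > N−3 and no position m with N−3 < m < j is the position of a left-to-right maximum of π' equals 3·C_{N−1} − 4·C_{N−2} − C_{N−3}, where C_n is the n-th Catalan number (this is the number of 321-avoiding interview orders won by the positional strategy that rejects the first N−3 candidates and accepts the next left-to-right maximum). Moreover, for all N > 8, this count is maximal among all cutoffs: for every k with 0 ≤ k ≤ N−1, the number of 321-avoiding permutations π of size N with position of N greater than k and no left-to-right maximum at any position strictly between k and the position of N is at most 3·C_{N−1} − 4·C_{N−2} − C_{N−3}. -/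
/-- One-line notation: `π i` is the (0-indexed) rank of the candidate at (0-indexed) position `i`.
`π` avoids the pattern 231 if no three positions carry entries in the relative order 2,3,1. -/
def Avoids231 {N : ℕ} (π : Fin N → Fin N) : Prop :=
  ¬ ∃ i j k : Fin N, i < j ∧ j < k ∧ π k < π i ∧ π i < π j

def Avoids132 {N : ℕ} (π : Fin N → Fin N) : Prop :=
  ¬ ∃ i j k : Fin N, i < j ∧ j < k ∧ π i < π k ∧ π k < π j

def Avoids321 {N : ℕ} (π : Fin N → Fin N) : Prop :=
  ¬ ∃ i j k : Fin N, i < j ∧ j < k ∧ π k < π j ∧ π j < π i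

def Avoids312 {N : ℕ} (π : Fin N → Fin N) : Prop :=
  ¬ ∃ i j k : Fin N, i < j ∧ j < k ∧ π j < π k ∧ π k < π i

def Avoids123 {N : ℕ} (π : Fin N → Fin N) : Prop :=
  ¬ ∃ i j k : Fin N, i < j ∧ j < k ∧ π i < π j ∧ π j < π k

def Avoids213 {N : ℕ} (π : Fin N → Fin N) : Prop :=
  ¬ ∃ i j k : Fin N, i < j ∧ j < k ∧ π j < π i ∧ π i < π k

/-- The entry at position `m` is a left-to-right maximum. -/
def IsLRMax {N : ℕ} (π : Fin N → Fin N) (m : Fin N) : Prop :=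
  ∀ l, l < m → π l < π m

/-- The flattening of the first `k` entries of `π`: the unique length-`k` sequence
on values `0,…,k-1` in the same relative order. -/
def flatten {N : ℕ} (π : Fin N → Fin N) {k : ℕ} (h : k ≤ N) : Fin k → Fin k :=
  fun a =>
    ⟨(Finset.univ.filter (fun b : Fin k => π (Fin.castLE h b) < π (Fin.castLE h a))).card, by
      have hlt : (Finset.univ.filter
          (fun b : Fin k => π (Fin.castLE h b) < π (Fin.castLE h a))).card <
          (Finset.univ : Finset (Fin k)).card := by
        apply Finset.card_lt_card
        rw [Finset.ssubset_univ_iff]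
        intro hEq
        have ha : a ∈ Finset.univ.filter
            (fun b : Fin k => π (Fin.castLE h b) < π (Fin.castLE h a)) := by
          rw [hEq]; exact Finset.mem_univ a
        simp at ha
      simpa using hlt⟩

/-- The `k`-th prefix flattenings of `π` and `τ` agree. -/
def PrefixEq {N M : ℕ} (π : Fin N → Fin N) (τ : Fin M → Fin M) (k : ℕ)
    (hN : k ≤ N) (hM : k ≤ M) : Prop :=
  ∀ a b : Fin k,
    (π (Fin.castLE hN a) < π (Fin.castLE hN b) ↔ τ (Fin.castLE hM a) < τ (Fin.castLE hM b))

/-- A strategy assigns accept/reject to every prefix flattening. -/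
def Strategy : Type := ∀ k : ℕ, (Fin k → Fin k) → Bool

/-- Playing strategy `s` on `π`, the player stops at (1-indexed) position `i`:
`i` is the least index whose prefix flattening `s` accepts, or `N` if there is none. -/
def StopsAt {N : ℕ} (s : Strategy) (π : Fin N → Fin N) (i : ℕ) : Prop :=
  1 ≤ i ∧ ∃ h : i ≤ N,
    (s i (flatten π h) = true ∨ i = N) ∧
    ∀ j, 1 ≤ j → j < i → ∀ hj : j ≤ N, s j (flatten π hj) = false

/-- Strategy `s` wins `π` if the entry at its stopping position is the maximum value. -/
def Wins {N : ℕ} (s : Strategy) (π : Fin N → Fin N) : Prop :=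
  ∃ i, StopsAt s π i ∧ ∃ h1 : i - 1 < N, ∃ h2 : N - 1 < N, π ⟨i - 1, h1⟩ = ⟨N - 1, h2⟩

/-- The positional strategy with cutoff `k` (reject the first `k` candidates, accept the next
left-to-right maximum) wins `π`. -/
def PosWin {N : ℕ} (hN : 0 < N) (k : ℕ) (π : Equiv.Perm (Fin N)) : Prop :=
  k ≤ (π.symm ⟨N - 1, by omega⟩).val ∧
  ∀ m : Fin N, k ≤ m.val → m.val < (π.symm ⟨N - 1, by omega⟩).val → ¬ IsLRMax ⇑π m

/-! ### Staircase paths and ballot numbers -/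

/-- Heights of staircase paths: weakly increasing sequences with `h 0 = 0` and `i ≤ h i ≤ b` for
`i ≤ k`. Such a finite sequence is encoded as a function on `ℕ` that is constant from `k` on. -/
def Stair (k b : ℕ) : Set (ℕ → ℕ) :=
  {h | h 0 = 0 ∧ Monotone h ∧ (∀ i ≤ k, i ≤ h i) ∧ (∀ i, k ≤ i → h i = h k) ∧ h k ≤ b}

/-- The number of staircase paths of length `k` with final height at most `b` (a ballot number). -/
noncomputable def ballot (k b : ℕ) : ℕ := (Stair k b).ncard

theorem Stair.zero (b : ℕ) : Stair 0 b = {fun _ => 0} := by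
  ext h
  simp only [Stair, Set.mem_ofPred_eq, Set.mem_singleton_iff]
  constructor
  · rintro ⟨h0, -, -, hc, -⟩
    funext i
    rw [hc i (Nat.zero_le i), h0]
  · rintro rfl
    exact ⟨rfl, monotone_const, by simp, by simp, Nat.zero_le _⟩

theorem Stair.empty {k b : ℕ} (h : b < k) : Stair k b = ∅ := by
  ext f
  simp only [Stair, Set.mem_ofPred_eq, Set.mem_empty_iff_false, iff_false]
  rintro ⟨-, -, h1, -, h2⟩
  have := h1 k le_rfl
  omega

/-- Splitting by whether the final height is at most `b` or equal to `b + 1`. -/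
theorem Stair.split (k b : ℕ) :
    Stair k (b + 1) = Stair k b ∪ {h ∈ Stair k (b + 1) | h k = b + 1} := by
  ext h
  simp only [Stair, Set.mem_ofPred_eq, Set.mem_union]
  constructor
  · rintro ⟨a1, a2, a3, a4, a5⟩
    by_cases hh : h k = b + 1
    · exact Or.inr ⟨⟨a1, a2, a3, a4, a5⟩, hh⟩
    · exact Or.inl ⟨a1, a2, a3, a4, by omega⟩
  · rintro (⟨a1, a2, a3, a4, a5⟩ | h)
    · exact ⟨a1, a2, a3, a4, by omega⟩
    · exact h.1

theorem Stair.disj (k b : ℕ) :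
    Disjoint (Stair k b) {h ∈ Stair k (b + 1) | h k = b + 1} := by
  rw [Set.disjoint_left]
  rintro h ⟨-, -, -, -, h1⟩ ⟨-, h2⟩
  omega

theorem Stair.finite (k b : ℕ) : (Stair k b).Finite := by
  -- A path is determined by its heights at `0, …, k`, all of which lie in `{0, …, b}`.
  have hmem : ∀ h ∈ Stair k b, ∀ i, h i ≤ b := by
    rintro h ⟨-, hm, -, hc, hb⟩ i
    rcases le_total i k with hi | hi
    · exact (hm hi).trans hb
    · rw [hc i hi]; exact hb
  let φ : Stair k b → (Fin (k + 1) → Fin (b + 1)) :=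
    fun h i => ⟨h.1 i, Nat.lt_succ_of_le (hmem h.1 h.2 i)⟩
  have hφ : Function.Injective φ := by
    intro f g hfg
    have key : ∀ i ≤ k, f.1 i = g.1 i := by
      intro i hi
      have := congrFun hfg ⟨i, Nat.lt_succ_of_le hi⟩
      simpa [φ] using this
    apply Subtype.ext
    funext i
    rcases le_total i k with hi | hi
    · exact key i hi
    · rw [f.2.2.2.2.1 i hi, g.2.2.2.2.1 i hi]; exact key k le_rfl
  have : Finite (Stair k b) := Finite.of_injective φ hφ
  exact Set.toFinite _

theorem Stair.fiber_finite (k b : ℕ) : {h ∈ Stair k (b + 1) | h k = b + 1}.Finite :=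
  (Stair.finite k (b + 1)).subset fun _ h => h.1

theorem ballot_split (k b : ℕ) :
    ballot k (b + 1) = ballot k b + {h ∈ Stair k (b + 1) | h k = b + 1}.ncard := by
  unfold ballot
  conv_lhs => rw [Stair.split]
  exact Set.ncard_union_eq (Stair.disj k b) (Stair.finite k b) (Stair.fiber_finite k b)

theorem ballot_zero (b : ℕ) : ballot 0 b = 1 := by
  rw [ballot, Stair.zero, Set.ncard_singleton]

theorem ballot_eq_zero {k b : ℕ} (h : b < k) : ballot k b = 0 := by
  rw [ballot, Stair.empty h, Set.ncard_empty]

/-- A path of length `k + 1` with final height `b + 1` is an arbitrary path of length `k` with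
heights at most `b + 1`, followed by one step up to `b + 1`. -/
theorem ballot_succ_succ {k b : ℕ} (hkb : k ≤ b) :
    ballot (k + 1) (b + 1) = ballot (k + 1) b + ballot k (b + 1) := by
  rw [ballot_split]
  congr 1
  let ext : (ℕ → ℕ) → (ℕ → ℕ) := fun g i => if i ≤ k then g i else b + 1
  have himg : {h ∈ Stair (k + 1) (b + 1) | h (k + 1) = b + 1} = ext '' Stair k (b + 1) := by
    ext h
    constructor
    · rintro ⟨⟨a1, a2, a3, a4, a5⟩, a6⟩
      refine ⟨fun i => h (min i k), ⟨?_, ?_, ?_, ?_, ?_⟩, ?_⟩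
      · simpa using a1
      · intro x y hxy
        exact a2 (by omega)
      · intro i hi
        simpa [min_eq_left hi] using a3 i (by omega)
      · intro i hi
        simp [min_eq_right hi]
      · have := a2 (show k ≤ k + 1 by omega)
        simp only [min_self]
        omega
      · funext i
        simp only [ext]
        split_ifs with hi
        · rw [min_eq_left hi]
        · rw [a4 i (by omega), a6]
    · rintro ⟨g, ⟨a1, a2, a3, a4, a5⟩, rfl⟩
      refine ⟨⟨?_, ?_, ?_, ?_, ?_⟩, ?_⟩
      · simpa [ext] using a1
      · intro x y hxy
        simp only [ext]
        have hx : x ≤ k → g x ≤ g k := fun h => a2 h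
        have := a2 hxy
        split_ifs <;> omega
      · intro i hi
        simp only [ext]
        split_ifs with h
        · exact a3 i h
        · omega
      · intro i hi
        simp only [ext]
        rw [if_neg (by omega), if_neg (by omega)]
      · simp [ext]
      · simp [ext]
  rw [himg, Set.InjOn.ncard_image, ballot]
  rintro f ⟨-, -, -, f4, -⟩ g ⟨-, -, -, g4, -⟩ hfg
  have key : ∀ i ≤ k, f i = g i := by
    intro i hi
    have := congrFun hfg i
    simpa [ext, hi] using this
  funext i
  rcases le_total i k with hi | hi
  · exact key i hi
  · rw [f4 i hi, g4 i hi]; exact key k le_rfl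

/-- The reflection-principle form of the ballot numbers. -/
theorem ballot_succ_eq_choose (k b : ℕ) (h : k ≤ b) :
    (ballot (k + 1) b : ℤ) = (k + 1 + b).choose (k + 1) - (k + 1 + b).choose k := by
  induction k generalizing b with
  | zero =>
    induction b with
    | zero => rw [ballot_eq_zero (by omega)]; simp
    | succ b ih =>
      rw [ballot_succ_succ (by omega), ballot_zero]
      have := ih (by omega)
      push_cast
      rw [this]
      simp
  | succ k ihk =>
    induction b, h using Nat.le_induction with
    | base =>
      -- On the diagonal both sides vanish, by symmetry of the binomial coefficients.
      rw [ballot_eq_zero (by omega)]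
      have : (k + 1 + 1 + (k + 1)).choose (k + 1 + 1) = (k + 1 + 1 + (k + 1)).choose (k + 1) :=
        Nat.choose_symm_of_eq_add (by omega)
      rw [this]; simp
    | succ b hb ih =>
      rw [ballot_succ_succ (by omega)]
      push_cast
      rw [ih, ihk (b + 1) (by omega)]
      have e1 := Nat.choose_succ_succ (k + 1 + 1 + b) (k + 1)
      have e2 := Nat.choose_succ_succ (k + 1 + 1 + b) k
      have s : k + 1 + (b + 1) = k + 1 + 1 + b := by omega
      have s' : k + 1 + 1 + (b + 1) = (k + 1 + 1 + b) + 1 := by omega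
      simp only [Nat.succ_eq_add_one] at e1 e2
      rw [s, s', e1, e2]
      push_cast
      ring

theorem ballot_closed (k d : ℕ) :
    ((k : ℤ) + d + 1) * ballot k (k + d) = (d + 1) * (2 * k + d).choose k := by
  cases k with
  | zero => simp [ballot_zero]
  | succ k =>
    rw [ballot_succ_eq_choose k _ (by omega), show k + 1 + (k + 1 + d) = 2 * (k + 1) + d by ring]
    have h := Nat.choose_succ_right_eq (2 * (k + 1) + d) k
    rw [show 2 * (k + 1) + d - k = k + 2 + d by omega] at h
    zify at h
    push_cast at h ⊢
    linear_combination h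

/-- The ratio of ballot numbers that are consecutive in the length and have the same bound. -/
theorem ballot_ratio (k d : ℕ) :
    ((d : ℤ) + 2) * (k + 1) * ballot (k + 1) (k + 1 + d) =
      (d + 1) * (2 * k + d + 2) * ballot k (k + 1 + d) := by
  have h1 := ballot_closed (k + 1) d
  have h2 := ballot_closed k (d + 1)
  rw [show k + (d + 1) = k + 1 + d by omega] at h2
  have h3 := Nat.add_one_mul_choose_eq (2 * k + (d + 1)) k
  rw [show 2 * k + (d + 1) + 1 = 2 * (k + 1) + d by omega] at h3
  zify at h3
  push_cast at h1 h2 h3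
  have hp : ((k : ℤ) + d + 2) ≠ 0 := by positivity
  apply mul_left_cancel₀ hp
  linear_combination ((d : ℤ) + 2) * (k + 1) * h1 - (d + 1) * (2 * k + d + 2) * h2
    - (d + 1) * (d + 2) * h3

theorem ballot_diag (n : ℕ) : ballot n n = catalan n := by
  have h := ballot_closed n 0
  have h2 := succ_mul_catalan_eq_centralBinom n
  rw [Nat.centralBinom] at h2
  have : (n + 1) * ballot n n = (n + 1) * catalan n := by
    rw [h2]; zify; simpa using h
  exact Nat.eq_of_mul_eq_mul_left (Nat.succ_pos n) this

theorem ballot_superdiag (n : ℕ) : ballot n (n + 1) = catalan (n + 1) := by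
  have := ballot_succ_succ (le_refl n)
  rw [ballot_eq_zero (Nat.lt_succ_self n), ballot_diag] at this
  omega

theorem ballot_mono {k b c : ℕ} (h : b ≤ c) : ballot k b ≤ ballot k c := by
  apply Set.ncard_le_ncard _ (Stair.finite k c)
  rintro f ⟨a1, a2, a3, a4, a5⟩
  exact ⟨a1, a2, a3, a4, a5.trans h⟩

theorem catalan_ratio (n : ℕ) : (n + 2) * catalan (n + 1) = 2 * (2 * n + 1) * catalan n := by
  have h1 := succ_mul_catalan_eq_centralBinom n
  have h2 := succ_mul_catalan_eq_centralBinom (n + 1)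
  have h3 := Nat.succ_mul_centralBinom_succ n
  rw [← h1, ← h2] at h3
  apply Nat.eq_of_mul_eq_mul_left (Nat.succ_pos n)
  simp only [Nat.succ_eq_add_one]
  linear_combination h3

/-! ### Counting the codes of winning permutations -/

/-- A path of length `k` with final height at most `b`, together with an index `j` between `k` and
the final height. For `b = N - 1` these encode the permutations won with cutoff `k`: the path
records the running maxima of the first `k` entries, and `j` is the position of the top value. -/
def WinCode (k b : ℕ) : Set ((ℕ → ℕ) × ℕ) :=
  {p | p.1 ∈ Stair k b ∧ k ≤ p.2 ∧ p.2 ≤ p.1 k}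

theorem WinCode.finite (k b : ℕ) : (WinCode k b).Finite := by
  apply ((Stair.finite k b).prod (Set.finite_Iic b)).subset
  rintro ⟨g, j⟩ ⟨h1, -, h2⟩
  exact ⟨h1, h2.trans h1.2.2.2.2⟩

theorem WinCode.ncard_step {k b : ℕ} :
    (WinCode k (b + 1)).ncard = (WinCode k b).ncard +
      {h ∈ Stair k (b + 1) | h k = b + 1}.ncard * (b + 2 - k) := by
  have hI : (Set.Icc k (b + 1)).ncard = b + 2 - k := by
    rw [← Finset.coe_Icc, Set.ncard_coe_finset, Nat.card_Icc]
  rw [← hI, ← Set.ncard_prod, ← Set.ncard_union_eq _ (WinCode.finite k b)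
    ((Stair.fiber_finite k b).prod (Set.finite_Icc _ _))]
  · congr 1
    ext ⟨g, j⟩
    simp only [WinCode, Set.mem_union, Set.mem_prod, Set.mem_ofPred_eq, Set.mem_Icc]
    have hs : g ∈ Stair k (b + 1) ↔ g ∈ Stair k b ∨ (g ∈ Stair k (b + 1) ∧ g k = b + 1) :=
      iff_of_eq (congrArg (g ∈ ·) (Stair.split k b))
    constructor
    · rintro ⟨h1, h2, h3⟩
      rcases hs.mp h1 with h | h
      · exact Or.inl ⟨h, h2, h3⟩
      · exact Or.inr ⟨h, h2, h.2 ▸ h3⟩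
    · rintro (⟨h1, h2, h3⟩ | ⟨h1, h2, h3⟩)
      · exact ⟨hs.mpr (Or.inl h1), h2, h3⟩
      · exact ⟨h1.1, h2, by rw [h1.2]; exact h3⟩
  · rw [Set.disjoint_left]
    rintro ⟨g, j⟩ h1 h2
    exact Set.disjoint_left.mp (Stair.disj k b) h1.1 h2.1

theorem WinCode.ncard_diag (k : ℕ) : (WinCode k k).ncard = ballot k k := by
  have : WinCode k k = (fun g => (g, k)) '' Stair k k := by
    ext ⟨g, j⟩
    simp only [WinCode, Set.mem_ofPred_eq, Set.mem_image, Prod.mk.injEq]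
    constructor
    · rintro ⟨h1, h2, h3⟩
      have := h1.2.2.2.2
      exact ⟨g, h1, rfl, by omega⟩
    · rintro ⟨g, h1, rfl, rfl⟩
      exact ⟨h1, le_rfl, h1.2.2.1 _ le_rfl⟩
  rw [this, Set.InjOn.ncard_image, ballot]
  intro f _ g _ h
  exact (Prod.mk.inj h).1

theorem WinCode.ncard_eq (k d : ℕ) :
    ((WinCode k (k + d)).ncard : ℤ) =
      (d + 2) * ballot k (k + d) - ballot k k - ballot (k + 1) (k + d) := by
  induction d with
  | zero =>
    rw [Nat.add_zero, WinCode.ncard_diag, ballot_eq_zero (Nat.lt_succ_self k)]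
    push_cast
    ring
  | succ d ih =>
    have h1 := ballot_split k (k + d)
    have h2 := ballot_succ_succ (k := k) (b := k + d) (by omega)
    rw [← Nat.add_assoc, WinCode.ncard_step, show k + d + 2 - k = d + 2 by omega]
    generalize {h ∈ Stair k (k + d + 1) | h k = k + d + 1}.ncard = t at *
    zify at h1 h2
    push_cast
    rw [ih]
    linear_combination (-(d : ℤ) - 2) * h1 + h2

/-! ### Comparison of the cutoffs -/

/-- The win counts are increasing in the cutoff `k` up to `b - 2`. -/
theorem WinCode.ncard_mono (k d : ℕ) :
    (WinCode k (k + (d + 3))).ncard ≤ (WinCode (k + 1) (k + (d + 3))).ncard := by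
  have e0 := WinCode.ncard_eq k (d + 3)
  have e1 := WinCode.ncard_eq (k + 1) (d + 2)
  have r1 := ballot_ratio k (d + 2)
  have r2 := ballot_ratio (k + 1) (d + 1)
  rw [show k + 1 + (d + 2) = k + (d + 3) by omega] at e1 r1
  rw [show k + 1 + 1 + (d + 1) = k + (d + 3) by omega] at r2
  -- Raising the bound from `k + 1` to `k + 2`, and then to `k + 3`, adds at least
  -- `ballot k (k + 1) = ballot (k + 1) (k + 1)` paths each time.
  have hc : 3 * ballot (k + 1) (k + 1) ≤ ballot (k + 1) (k + (d + 3)) := by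
    have s1 := ballot_succ_succ (k := k) (b := k + 1) (by omega)
    have s2 := ballot_succ_succ (k := k) (b := k + 2) (by omega)
    have s3 := ballot_superdiag k
    have s4 := ballot_diag (k + 1)
    have m1 := ballot_mono (k := k) (show k + 1 ≤ k + 1 + 1 by omega)
    have m2 := ballot_mono (k := k) (show k + 1 ≤ k + 2 + 1 by omega)
    have m3 := ballot_mono (k := k + 1) (show k + 2 + 1 ≤ k + (d + 3) by omega)
    simp only [show k + 1 + 1 = k + 2 from rfl] at *
    omega
  zify at hc ⊢
  rw [e0, e1]
  generalize (ballot (k + 1) (k + 1) : ℤ) = c at *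
  have hc0 : (0 : ℤ) ≤ ballot k k := by positivity
  generalize (ballot k k : ℤ) = c0 at *
  have hx : (0 : ℤ) ≤ ballot (k + 1) (k + (d + 3)) := by positivity
  generalize (ballot (k + 1) (k + (d + 3)) : ℤ) = x at *
  generalize (ballot k (k + (d + 3)) : ℤ) = y at *
  generalize (ballot (k + 1 + 1) (k + (d + 3)) : ℤ) = z at *
  push_cast at *
  have hk : (0 : ℤ) ≤ k := by positivity
  have hd : (0 : ℤ) ≤ d := by positivity
  generalize (k : ℤ) = K at *
  generalize (d : ℤ) = D at *
  suffices h : 0 ≤ 3 * ((D + 5) * (x - y) - z) - x by linarith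
  have hpos : 0 < (D + 3) * (2 * K + D + 4) * (K + 2) := by positivity
  refine nonneg_of_mul_nonneg_right (b := 3 * ((D + 5) * (x - y) - z) - x) ?_ hpos
  -- Both ratio identities turn the left side into `x` times a polynomial with nonnegative
  -- coefficients.
  have : (D + 3) * (2 * K + D + 4) * (K + 2) * (3 * ((D + 5) * (x - y) - z) - x) =
      x * (3 * (K + 2) * (D + 3) * (2 * K + D + 4) * (D + 5)
        - 3 * (K + 2) * (D + 5) * (D + 4) * (K + 1)
        - 3 * (2 * K + D + 4) * (D + 2) * (2 * K + D + 5)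
        - (D + 3) * (2 * K + D + 4) * (K + 2)) := by
    linear_combination 3 * (K + 2) * (D + 5) * r1 - 3 * (2 * K + D + 4) * r2
  rw [this]
  apply mul_nonneg hx
  ring_nf
  positivity

theorem catalan_growth (n : ℕ) (hn : 6 ≤ n) :
    3 * catalan (n + 1) + catalan n ≤ catalan (n + 2) := by
  have h1 := catalan_ratio n
  have h2 := catalan_ratio (n + 1)
  obtain ⟨m, rfl⟩ := Nat.exists_eq_add_of_le hn
  generalize catalan (6 + m) = a at *
  generalize catalan (6 + m + 1) = b at *
  generalize catalan (6 + m + 1 + 1) = c at *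
  zify at *
  have hb : (0 : ℤ) ≤ b := by positivity
  have ha : (0 : ℤ) ≤ a := by positivity
  have hm : (0 : ℤ) ≤ m := by positivity
  generalize (a : ℤ) = a at *
  generalize (b : ℤ) = b at *
  generalize (c : ℤ) = c at *
  generalize (m : ℤ) = m at *
  suffices h : 0 ≤ c - 3 * b - a by linarith
  have hpos : 0 < (m + 9) * (m + 8) := by positivity
  refine nonneg_of_mul_nonneg_right (b := c - 3 * b - a) ?_ hpos
  have : (m + 9) * (m + 8) * (c - 3 * b - a) = a * (3 * m ^ 2 + 21 * m + 6) := by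
    linear_combination (m + 8) * h2 + (m + 3) * h1
  rw [this]
  positivity

/-! ### Running maxima of 321-avoiding permutations -/

/-- One more than the largest of the first `i` entries of `π`, or `0` if `i = 0`. -/
def height {N : ℕ} (π : Equiv.Perm (Fin N)) (i : ℕ) : ℕ :=
  (Finset.univ.filter fun l : Fin N => l.val < i).sup fun l => (π l).val + 1

theorem height_le_iff {N : ℕ} (π : Equiv.Perm (Fin N)) (i c : ℕ) :
    height π i ≤ c ↔ ∀ l : Fin N, l.val < i → (π l).val < c := by
  simp [height, Finset.sup_le_iff]

theorem lt_height {N : ℕ} (π : Equiv.Perm (Fin N)) {i : ℕ} {l : Fin N} (h : l.val < i) :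
    (π l).val < height π i :=
  (height_le_iff π i _).mp le_rfl l h

theorem height_zero {N : ℕ} (π : Equiv.Perm (Fin N)) : height π 0 = 0 :=
  Nat.le_zero.mp ((height_le_iff π 0 0).mpr fun _ hl => absurd hl (Nat.not_lt_zero _))

theorem height_mono {N : ℕ} (π : Equiv.Perm (Fin N)) : Monotone (height π) := fun _ _ h =>
  (height_le_iff π _ _).mpr fun _ hl => lt_height π (hl.trans_le h)

theorem height_le {N : ℕ} (π : Equiv.Perm (Fin N)) (i : ℕ) : height π i ≤ N :=
  (height_le_iff π _ _).mpr fun l _ => (π l).isLt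

theorem height_succ {N : ℕ} (π : Equiv.Perm (Fin N)) (i : Fin N) :
    height π (i + 1) = max (height π i) ((π i).val + 1) := by
  apply le_antisymm
  · rw [height_le_iff]
    intro l hl
    rcases Nat.lt_succ_iff_lt_or_eq.mp hl with h | h
    · exact (lt_height π h).trans_le (le_max_left _ _)
    · rw [Fin.ext h]
      exact (Nat.lt_succ_self _).trans_le (le_max_right _ _)
  · exact max_le (height_mono π (Nat.le_succ _)) (lt_height π (Nat.lt_succ_self _))

theorem le_height {N : ℕ} (π : Equiv.Perm (Fin N)) {i : ℕ} (hi : i ≤ N) : i ≤ height π i := by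
  have h : ((Finset.univ.filter fun l : Fin N => l.val < i).image fun l => (π l).val).card ≤
      (Finset.range (height π i)).card := by
    apply Finset.card_le_card
    intro v hv
    simp only [Finset.mem_image, Finset.mem_filter, Finset.mem_univ, true_and] at hv
    obtain ⟨l, hl, rfl⟩ := hv
    exact Finset.mem_range.mpr (lt_height π hl)
  have hinj : Function.Injective fun l => (π l).val := Fin.val_injective.comp π.injective
  rw [Finset.card_image_of_injective _ hinj,
    Fin.card_filter_val_lt, Finset.card_range, min_eq_right hi] at h
  exact h

theorem isLRMax_iff {N : ℕ} (π : Equiv.Perm (Fin N)) (m : Fin N) :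
    IsLRMax ⇑π m ↔ height π m ≤ (π m).val :=
  (height_le_iff π _ _).symm

/-- In a 321-avoiding permutation, an entry below the running maximum exceeds no later entry. -/
theorem le_of_lt_height {N : ℕ} {σ : Equiv.Perm (Fin N)} (hσ : Avoids321 ⇑σ) {i l : Fin N}
    (hi : (σ i).val < height σ i) (hil : i < l) : σ i ≤ σ l := by
  by_contra hlt
  apply absurd hi
  rw [not_lt, height_le_iff]
  intro p hp
  rcases lt_trichotomy (σ p) (σ i) with h | h | h
  · exact h
  · exact absurd (σ.injective h) (Fin.ne_of_lt hp)
  · exact absurd ⟨p, i, l, hp, hil, not_le.mp hlt, h⟩ hσ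

theorem not_lt_of_agree {N : ℕ} {π σ : Equiv.Perm (Fin N)} (hσ : Avoids321 ⇑σ) {i : Fin N}
    (hi : (σ i).val < height σ i) (hag : ∀ l, l < i → π l = σ l) : ¬ π i < σ i := by
  intro hlt
  -- The value `π i` occurs in `σ` after position `i`.
  have hs : σ (σ.symm (π i)) = π i := σ.apply_symm_apply _
  have hgt : i < σ.symm (π i) := by
    rcases lt_trichotomy i (σ.symm (π i)) with h | h | h
    · exact h
    · rw [← h] at hs
      exact absurd hs hlt.ne'
    · have := hag _ h
      rw [hs] at this
      exact absurd (π.injective this) h.ne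
  have := le_of_lt_height hσ hi hgt
  rw [hs] at this
  exact absurd hlt (not_lt.mpr this)

/-- A 321-avoiding permutation is determined by its running maxima: every other entry is the
smallest value not used before. -/
theorem eq_of_height_eq {N : ℕ} {π σ : Equiv.Perm (Fin N)} (hπ : Avoids321 ⇑π)
    (hσ : Avoids321 ⇑σ) (h : ∀ i ≤ N, height π i = height σ i) : π = σ := by
  have key : ∀ n : ℕ, ∀ hn : n < N, π ⟨n, hn⟩ = σ ⟨n, hn⟩ := by
    intro n
    induction n using Nat.strong_induction_on with
    | _ n ih =>
      intro hn
      have hag : ∀ l, l < (⟨n, hn⟩ : Fin N) → π l = σ l := fun l hl => ih l.val hl l.isLt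
      have h0 := h n hn.le
      have h1 := h (n + 1) hn
      have e1 := height_succ π ⟨n, hn⟩
      have e2 := height_succ σ ⟨n, hn⟩
      simp only at e1 e2
      by_cases hr : height π n < height π (n + 1)
      · apply Fin.ext
        omega
      · have a1 := not_lt_of_agree (π := π) hσ (i := ⟨n, hn⟩) (by simp only; omega) hag
        have a2 := not_lt_of_agree (π := σ) hπ (i := ⟨n, hn⟩) (by simp only; omega)
          fun l hl => (hag l hl).symm
        exact le_antisymm (not_lt.mp a2) (not_lt.mp a1)
  exact Equiv.ext fun i => key i.val i.isLt

/-- The sequence with running maxima prescribed by `h`: where `h` rises its entry is the new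
maximum, and elsewhere it is the smallest value not used before. -/
noncomputable def greedy (h : ℕ → ℕ) (i : ℕ) : ℕ :=
  if h i < h (i + 1) then h (i + 1) - 1 else sInf {v | ∀ l, (_ : l < i) → greedy h l ≠ v}
termination_by i

theorem greedy_rise {h : ℕ → ℕ} {i : ℕ} (hi : h i < h (i + 1)) :
    greedy h i = h (i + 1) - 1 := by
  rw [greedy, if_pos hi]

theorem greedy_flat {h : ℕ → ℕ} {i : ℕ} (hi : ¬ h i < h (i + 1)) :
    greedy h i = sInf {v | ∀ l, l < i → greedy h l ≠ v} := by
  rw [greedy, if_neg hi]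

theorem greedy_spec {h : ℕ → ℕ} {N : ℕ} (hm : Monotone h) (hN : ∀ i ≤ N, i ≤ h i) (i : ℕ)
    (hi : i < N) : greedy h i < h (i + 1) ∧ ∀ l < i, greedy h l ≠ greedy h i := by
  induction i using Nat.strong_induction_on with
  | _ i ih =>
    by_cases hr : h i < h (i + 1)
    · rw [greedy_rise hr]
      refine ⟨by omega, fun l hl => ?_⟩
      have h1 := (ih l hl (by omega)).1
      have h2 : h (l + 1) ≤ h i := hm hl
      omega
    · -- Only `i` values are used, so one of `0, …, i` is still free, and it is below `h (i + 1)`.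
      obtain ⟨v, hv, hv'⟩ : ∃ v ∈ Finset.range (i + 1),
          v ∉ (Finset.range i).image (greedy h) := by
        apply Finset.exists_mem_notMem_of_card_lt_card
        calc _ ≤ (Finset.range i).card := Finset.card_image_le
          _ < _ := by simp
      have hvmem : v ∈ {v | ∀ l, l < i → greedy h l ≠ v} := by
        intro l hl he
        exact hv' (Finset.mem_image.mpr ⟨l, Finset.mem_range.mpr hl, he⟩)
      rw [greedy_flat hr]
      refine ⟨?_, fun l hl => Nat.sInf_mem ⟨v, hvmem⟩ l hl⟩
      have h1 := Nat.sInf_le hvmem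
      have h2 := hN (i + 1) hi
      have h3 := Finset.mem_range.mp hv
      omega

/-- Every admissible height sequence is realised by a 321-avoiding permutation. -/
theorem exists_perm_of_height {h : ℕ → ℕ} {N : ℕ} (h0 : h 0 = 0) (hm : Monotone h)
    (hN : ∀ i ≤ N, i ≤ h i) (htop : h N = N) :
    ∃ π : Equiv.Perm (Fin N), Avoids321 ⇑π ∧ ∀ i ≤ N, height π i = h i := by
  have hlt : ∀ i : Fin N, greedy h i < N := fun i => by
    have h1 := (greedy_spec hm hN i i.isLt).1
    have h2 : h (i + 1) ≤ h N := hm i.isLt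
    omega
  let f : Fin N → Fin N := fun i => ⟨greedy h i, hlt i⟩
  have hf : Function.Injective f := by
    intro x y hxy
    have hxy' : greedy h x = greedy h y := congrArg Fin.val hxy
    rcases lt_trichotomy x y with hl | hl | hl
    · exact absurd hxy' ((greedy_spec hm hN y y.isLt).2 x hl)
    · exact hl
    · exact absurd hxy'.symm ((greedy_spec hm hN x x.isLt).2 y hl)
  let π : Equiv.Perm (Fin N) := Equiv.ofBijective f (Finite.injective_iff_bijective.mp hf)
  have hπ : ∀ i, (π i).val = greedy h i := fun i => rfl
  refine ⟨π, ?_, ?_⟩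
  · rintro ⟨a, b, c, hab, hbc, hcb, hba⟩
    rw [Fin.lt_def, hπ, hπ] at hcb hba
    have h1 := (greedy_spec hm hN a a.isLt).1
    have h2 : h (a + 1) ≤ h b := hm hab
    by_cases hr : h b < h (b + 1)
    · rw [greedy_rise hr] at hba
      omega
    · rw [greedy_flat hr] at hcb
      have : greedy h c ∈ {v | ∀ l, l < b.val → greedy h l ≠ v} := fun l hl =>
        (greedy_spec hm hN c c.isLt).2 l (hl.trans hbc)
      exact absurd (Nat.sInf_le this) (not_le.mpr hcb)
  · intro i
    induction i with
    | zero => intro _; rw [height_zero, h0]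
    | succ i ih =>
      intro hi
      have e := height_succ π ⟨i, hi⟩
      rw [hπ] at e
      simp only at e
      rw [e, ih (by omega)]
      have h1 := (greedy_spec hm hN i hi).1
      have h2 : h i ≤ h (i + 1) := hm (Nat.le_succ i)
      by_cases hr : h i < h (i + 1)
      · rw [greedy_rise hr]
        omega
      · omega

/-! ### Coding the winning permutations -/

/-- The code of a permutation for the cutoff `k`: its heights up to `k`, and the position of its
largest value. -/
def code {N : ℕ} (hN : 0 < N) (k : ℕ) (π : Equiv.Perm (Fin N)) : (ℕ → ℕ) × ℕ :=
  (fun i => height π (min i k), (π.symm ⟨N - 1, by omega⟩).val)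

theorem height_at_top {N : ℕ} (hN : 0 < N) (π : Equiv.Perm (Fin N)) :
    height π (π.symm ⟨N - 1, by omega⟩).val ≤ N - 1 ∧
      ∀ i, (π.symm ⟨N - 1, by omega⟩).val < i → height π i = N := by
  constructor
  · rw [height_le_iff]
    intro l hl
    have h1 : (π l).val ≠ N - 1 := by
      intro h
      have : π l = ⟨N - 1, by omega⟩ := Fin.ext h
      rw [← this, π.symm_apply_apply] at hl
      exact lt_irrefl _ hl
    have := (π l).isLt
    omega
  · intro i hi
    have h1 := lt_height π hi
    rw [π.apply_symm_apply] at h1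
    have := height_le π i
    simp only at h1
    omega

/-- For a permutation won with cutoff `k`, the heights stay constant from `k` up to the position of
the largest value. -/
theorem PosWin.height_eq {N : ℕ} {hN : 0 < N} {k : ℕ} {π : Equiv.Perm (Fin N)}
    (h : PosWin hN k π) (i : ℕ) (hk : k ≤ i) (hi : i ≤ (π.symm ⟨N - 1, by omega⟩).val) :
    height π i = height π k := by
  induction i, hk using Nat.le_induction with
  | base => rfl
  | succ i hki ih =>
    have hiN : i < N := by have := (π.symm ⟨N - 1, by omega⟩).isLt; omega
    have h1 := h.2 ⟨i, hiN⟩ hki hi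
    rw [isLRMax_iff] at h1
    have h2 := height_succ π ⟨i, hiN⟩
    have h3 := ih (by omega)
    simp only at h1 h2
    omega

theorem code_range {N : ℕ} (hN : 0 < N) {k : ℕ} (hk : k ≤ N - 1) :
    Set.range (fun π : {π : Equiv.Perm (Fin N) // Avoids321 ⇑π ∧ PosWin hN k π} =>
      code hN k π.1) = WinCode k (N - 1) := by
  ext ⟨g, j⟩
  constructor
  · rintro ⟨⟨π, hav, hw⟩, he⟩
    simp only [code, Prod.mk.injEq] at he
    obtain ⟨rfl, rfl⟩ := he
    have e := hw.height_eq _ hw.1 le_rfl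
    have ht := (height_at_top hN π).1
    have hj := (π.symm ⟨N - 1, by omega⟩).isLt
    refine ⟨⟨?_, ?_, ?_, ?_, ?_⟩, hw.1, ?_⟩
    · simp [height_zero]
    · intro x y hxy
      exact height_mono π (by omega)
    · intro i hi
      simp only [min_eq_left hi]
      exact le_height π (by omega)
    · intro i hi
      simp [min_eq_right hi]
    · simp only [min_self]
      omega
    · simp only [min_self]
      rw [← e]
      exact le_height π hj.le
  · rintro ⟨⟨g0, gm, gi, gc, gb⟩, hkj, hjg⟩
    simp only at g0 gm gi gc gb hkj hjg
    have gle : ∀ i, g i ≤ N - 1 := fun i => by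
      rcases le_total i k with hi | hi
      · exact (gm hi).trans gb
      · rw [gc i hi]; exact gb
    obtain ⟨π, hav, hh⟩ := exists_perm_of_height (h := fun i => if i ≤ j then g i else N) (N := N)
      (by simpa using g0)
      (by
        intro x y hxy
        have h1 := gm hxy
        have h2 := gle x
        dsimp only
        split_ifs <;> omega)
      (by
        intro i hi
        split_ifs with hij
        · rcases le_total i k with hik | hik
          · exact gi i hik
          · rw [gc i hik]; omega
        · exact hi)
      (by
        have : ¬ N ≤ j := by omega
        simp [this])
    have hjN : j < N := by omega
    have hpos : π.symm ⟨N - 1, by omega⟩ = ⟨j, hjN⟩ := by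
      rw [Equiv.symm_apply_eq]
      apply Fin.ext
      have e := height_succ π ⟨j, hjN⟩
      simp only at e
      rw [hh _ hjN, hh _ hjN.le, if_neg (by omega), if_pos le_rfl] at e
      have := gle j
      change N - 1 = (π ⟨j, hjN⟩).val
      omega
    have hw : PosWin hN k π := by
      rw [PosWin, hpos]
      refine ⟨hkj, fun m hkm hmj => ?_⟩
      simp only at hmj
      rw [isLRMax_iff]
      have e := height_succ π m
      rw [hh _ m.isLt, hh _ m.isLt.le, if_pos (by omega), if_pos hmj.le, gc m hkm,
        gc (m + 1) (by omega)] at e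
      rw [hh _ m.isLt.le, if_pos hmj.le, gc m hkm]
      omega
    refine ⟨⟨π, hav, hw⟩, ?_⟩
    simp only [code, hpos, Prod.mk.injEq, and_true]
    funext i
    rw [hh _ (by omega), if_pos (by omega)]
    rcases le_total i k with hi | hi
    · rw [min_eq_left hi]
    · rw [min_eq_right hi, gc i hi]

theorem code_injective {N : ℕ} (hN : 0 < N) {k : ℕ} :
    Function.Injective
      (fun π : {π : Equiv.Perm (Fin N) // Avoids321 ⇑π ∧ PosWin hN k π} => code hN k π.1) := by
  rintro ⟨π, hπ, wπ⟩ ⟨σ, hσ, wσ⟩ he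
  simp only [code, Prod.mk.injEq] at he
  obtain ⟨h1, h2⟩ := he
  have key : ∀ i ≤ k, height π i = height σ i := fun i hi => by
    have := congrFun h1 i
    simpa [min_eq_left hi] using this
  apply Subtype.ext
  apply eq_of_height_eq hπ hσ
  intro i _
  rcases le_total i k with hi | hi
  · exact key i hi
  · rcases le_or_gt i (π.symm ⟨N - 1, by omega⟩).val with hj | hj
    · rw [wπ.height_eq i hi hj, wσ.height_eq i hi (h2 ▸ hj), key k le_rfl]
    · rw [(height_at_top hN π).2 i hj, (height_at_top hN σ).2 i (h2 ▸ hj)]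

theorem card_posWin {N : ℕ} (hN : 0 < N) {k : ℕ} (hk : k ≤ N - 1) :
    Nat.card {π : Equiv.Perm (Fin N) // Avoids321 ⇑π ∧ PosWin hN k π} =
      (WinCode k (N - 1)).ncard := by
  rw [← code_range hN hk, ← Nat.card_range_of_injective (code_injective hN (k := k))]
  rfl

/-! ### The optimal cutoff -/

/-- The number of permutations won with the cutoff three below the size. -/
theorem WinCode.ncard_best (n : ℕ) : ((WinCode n (n + 2)).ncard : ℤ) =
    3 * catalan (n + 2) - 4 * catalan (n + 1) - catalan n := by
  have h1 := WinCode.ncard_eq n 2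
  have h2 := ballot_succ_succ (k := n) (b := n + 1) (by omega)
  have h3 := ballot_superdiag (n + 1)
  have h4 := ballot_diag (n + 1)
  have h5 := ballot_diag n
  simp only [show n + 1 + 1 = n + 2 from rfl] at *
  rw [h1, h5, h3]
  rw [h3, h4] at h2
  zify at h2
  push_cast
  linear_combination -4 * h2

theorem WinCode.ncard_le_best {n k : ℕ} (hn : 6 ≤ n) (hk : k ≤ n + 2) :
    (WinCode k (n + 2)).ncard ≤ (WinCode n (n + 2)).ncard := by
  rcases le_or_gt k n with hkn | hkn
  · clear hk
    induction hkn using Nat.decreasingInduction with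
    | self => rfl
    | of_succ k hkn ih =>
      refine le_trans ?_ ih
      have := WinCode.ncard_mono k (n - k - 1)
      rwa [show k + (n - k - 1 + 3) = n + 2 by omega] at this
  · have hb := WinCode.ncard_best n
    have hg := catalan_growth n hn
    rcases (show k = n + 1 ∨ k = n + 2 by omega) with rfl | rfl
    · have h1 := WinCode.ncard_eq (n + 1) 1
      have h2 := ballot_superdiag (n + 1)
      have h3 := ballot_diag (n + 2)
      have h4 := ballot_diag (n + 1)
      simp only [show n + 1 + 1 = n + 2 from rfl] at *
      rw [h2, h3, h4] at h1
      push_cast at h1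
      zify at hg ⊢
      linarith
    · have h1 := WinCode.ncard_diag (n + 2)
      rw [ballot_diag] at h1
      zify at hg h1 ⊢
      have : (0 : ℤ) ≤ catalan (n + 1) := by positivity
      have : (0 : ℤ) ≤ catalan n := by positivity
      linarith

/-- the positional strategy with cutoff `N-3` wins exactly
`3C_{N-1} - 4C_{N-2} - C_{N-3}` of the 321-avoiding interview orders of size `N ≥ 3`, and
for `N > 8` this is maximal among all positional cutoffs `0 ≤ k ≤ N-1`. -/
theorem stmt12 {N : ℕ} (hN : 3 ≤ N) :
    ((Nat.card {π : Equiv.Perm (Fin N) // Avoids321 ⇑π ∧ PosWin (by omega) (N - 3) π} : ℤ) =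
      3 * catalan (N - 1) - 4 * catalan (N - 2) - catalan (N - 3)) ∧
    (8 < N → ∀ k : ℕ, k ≤ N - 1 →
      (Nat.card {π : Equiv.Perm (Fin N) // Avoids321 ⇑π ∧ PosWin (by omega) k π} : ℤ) ≤
        3 * catalan (N - 1) - 4 * catalan (N - 2) - catalan (N - 3)) := by
  obtain ⟨n, rfl⟩ := Nat.exists_eq_add_of_le' hN
  have hb := WinCode.ncard_best n
  have e1 : n + 3 - 1 = n + 2 := rfl
  have e2 : n + 3 - 2 = n + 1 := rfl
  have e3 : n + 3 - 3 = n := rfl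
  constructor
  · rw [card_posWin (by omega) (by omega)]
    exact hb
  · intro h8 k hk
    rw [card_posWin (by omega) hk, e1, e2, e3, ← hb]
    exact_mod_cast WinCode.ncard_le_best (by omega) hk
end

section
/- For every N ≥ 1 and every k with 0 ≤ k ≤ N−1, the number of 321-avoiding permutations π of size N such that π_1 < π_2 < ⋯ < π_k (vacuous for k = 0) and such that, letting j be the position of the value N in π, j > k and no position m with k < m < j is the position of a left-to-right maximum of π, equals k·binom(N−1, k+1) + binom(N−1, k). -/
open Finset

/-! ### Leading values and positions -/

/-- The set of values (as natural numbers) taken by `π` on its first `k` positions. -/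
def prefixValues {n : ℕ} (k : ℕ) (π : Equiv.Perm (Fin (n + 1))) : Finset ℕ :=
  (univ.filter (fun i : Fin (n + 1) => i.val < k)).image (fun i => (π i).val)

lemma mem_prefixValues {n k : ℕ} (π : Equiv.Perm (Fin (n + 1))) (v : ℕ) :
    v ∈ prefixValues k π ↔ ∃ i : Fin (n + 1), i.val < k ∧ (π i).val = v := by
  simp [prefixValues]

lemma card_prefixValues {n k : ℕ} (hk : k ≤ n) (π : Equiv.Perm (Fin (n + 1))) :
    (prefixValues k π).card = k := by
  have hinj : Function.Injective (fun i => (π i).val) := Fin.val_injective.comp π.injective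
  rw [prefixValues, card_image_of_injective _ hinj, Fin.card_filter_val_lt]
  omega

/-- The `k` leading positions together with a further position `j`. -/
def leadingWith (n k j : ℕ) : Finset (Fin (n + 1)) :=
  univ.filter (fun i => i.val < k ∨ i.val = j)

lemma mem_leadingWith {n k j : ℕ} (i : Fin (n + 1)) :
    i ∈ leadingWith n k j ↔ i.val < k ∨ i.val = j := by
  simp [leadingWith]

/-! ### Permutations increasing on two complementary classes -/

/-- Two functions that are strictly increasing on a finite set of positions and have the same
image there agree there. -/
lemma eqOn_of_strictMonoOn {n : ℕ} {f g : Fin n → Fin n} {P : Set (Fin n)}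
    (hf : StrictMonoOn f P) (hg : StrictMonoOn g P) (h : f '' P = g '' P) : Set.EqOn f g P := by
  have hf' : StrictMono (P.domRestrict f) := fun a b hab => hf a.2 b.2 hab
  have hg' : StrictMono (P.domRestrict g) := fun a b hab => hg a.2 b.2 hab
  have := (StrictMono.range_inj hf' hg').1 (by rwa [Set.range_domRestrict, Set.range_domRestrict])
  intro x hx
  exact congrFun this ⟨x, hx⟩

/-- For finite sets `P`, `Q` of the same size there is a permutation sending `P` to `Q` and
increasing both on `P` and off `P`. -/
lemma exists_perm_of_card_eq {n : ℕ} (P Q : Finset (Fin n)) (h : P.card = Q.card) :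
    ∃ e : Equiv.Perm (Fin n), StrictMonoOn e (P : Set (Fin n)) ∧
      StrictMonoOn e (P : Set (Fin n))ᶜ ∧ ∀ x, e x ∈ Q ↔ x ∈ P := by
  classical
  have hc : Pᶜ.card = Qᶜ.card := by rw [card_compl, card_compl, h]
  let e₁ : P ≃o Q := (P.orderIsoOfFin h).symm.trans (Q.orderIsoOfFin rfl)
  let e₂ : (Pᶜ : Finset _) ≃o (Qᶜ : Finset _) :=
    (Pᶜ.orderIsoOfFin hc).symm.trans (Qᶜ.orderIsoOfFin rfl)
  let f : Fin n → Fin n := fun x =>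
    if hx : x ∈ P then (e₁ ⟨x, hx⟩).1 else (e₂ ⟨x, mem_compl.2 hx⟩).1
  have f_pos : ∀ x (hx : x ∈ P), f x = (e₁ ⟨x, hx⟩).1 := fun x hx => dif_pos hx
  have f_neg : ∀ x (hx : x ∉ P), f x = (e₂ ⟨x, mem_compl.2 hx⟩).1 := fun x hx => dif_neg hx
  have hQ : ∀ x, f x ∈ Q ↔ x ∈ P := by
    intro x
    by_cases hx : x ∈ P
    · simp only [hx, iff_true, f_pos x hx]
      exact (e₁ ⟨x, hx⟩).2
    · simp only [hx, iff_false, f_neg x hx]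
      exact mem_compl.1 (e₂ ⟨x, mem_compl.2 hx⟩).2
  have m₁ : StrictMonoOn f (P : Set (Fin n)) := by
    intro x hx y hy hxy
    rw [f_pos x hx, f_pos y hy]
    exact e₁.strictMono (show (⟨x, hx⟩ : P) < ⟨y, hy⟩ from hxy)
  have m₂ : StrictMonoOn f (P : Set (Fin n))ᶜ := by
    intro x hx y hy hxy
    have hx' : x ∉ P := hx
    have hy' : y ∉ P := hy
    rw [f_neg x hx', f_neg y hy']
    exact e₂.strictMono
      (show (⟨x, mem_compl.2 hx'⟩ : (Pᶜ : Finset _)) < ⟨y, mem_compl.2 hy'⟩ from hxy)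
  have inj : Function.Injective f := by
    intro x y hxy
    by_cases hx : x ∈ P
    · have hy : y ∈ P := by rw [← hQ, ← hxy, hQ]; exact hx
      exact m₁.injOn hx hy hxy
    · have hy : y ∉ P := by rw [← hQ, ← hxy, hQ]; exact hx
      exact m₂.injOn hx hy hxy
  exact ⟨Equiv.ofBijective f (Finite.injective_iff_bijective.1 inj), m₁, m₂, hQ⟩

/-! ### Characterization of the counted permutations -/

/-- The permutations to be counted are exactly those increasing on the `k` leading positions
together with the position `j` of the maximum, increasing on all other positions, and satisfying
`k ≤ j ≤ 1 + max` of the `k` leading values (zero-indexed, with `1 + max ∅ = 0`). -/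
lemma good_iff {n k : ℕ} (π : Equiv.Perm (Fin (n + 1))) (j : Fin (n + 1))
    (hj : π j = Fin.last n) :
    (Avoids321 ⇑π ∧ (∀ a b : Fin (n + 1), a < b → b.val < k → π a < π b) ∧
      PosWin (Nat.succ_pos n) k π) ↔
    k ≤ j.val ∧ StrictMonoOn π (leadingWith n k j : Set (Fin (n + 1))) ∧
      StrictMonoOn π (leadingWith n k j : Set (Fin (n + 1)))ᶜ ∧
      j.val ≤ (prefixValues k π).sup (· + 1) := by
  have hjs : π.symm ⟨n + 1 - 1, by omega⟩ = j := by
    rw [Equiv.symm_apply_eq, hj]; rfl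
  have hlt : ∀ x, x ≠ j → π x < π j := by
    intro x hx
    rw [hj]
    exact Fin.lt_last_iff_ne_last.2 (fun h => hx (π.injective (h.trans hj.symm)))
  unfold PosWin
  rw [hjs]
  constructor
  · rintro ⟨hav, hinc, hkj, hno⟩
    refine ⟨hkj, ?_, ?_, ?_⟩
    · intro x hx y hy hxy
      simp only [mem_coe, mem_leadingWith] at hx hy
      rcases hy with hy | hy
      · exact hinc x y hxy hy
      · obtain rfl : y = j := Fin.ext hy
        exact hlt x hxy.ne
    · intro x hx y hy hxy
      simp only [Set.mem_compl_iff, mem_coe, mem_leadingWith, not_or, not_lt] at hx hy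
      by_contra hcon
      have hyx : π y < π x :=
        lt_of_le_of_ne (not_lt.1 hcon) (fun h => hxy.ne' (π.injective h))
      -- `x` is not a left-to-right maximum, so a larger entry precedes it
      have hnl : ∃ l, l < x ∧ π x < π l := by
        rcases lt_or_ge j x with h | h
        · exact ⟨j, h, hlt x h.ne'⟩
        · have hxj : x < j := lt_of_le_of_ne h (fun h => hx.2 (congrArg Fin.val h))
          have := hno x hx.1 hxj
          unfold IsLRMax at this
          push Not at this
          obtain ⟨l, hl, hle⟩ := this
          exact ⟨l, hl, lt_of_le_of_ne hle (fun h => hl.ne' (π.injective h))⟩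
      obtain ⟨l, hl, hxl⟩ := hnl
      exact hav ⟨l, x, y, hl, hxy, hyx, hxl⟩
    · -- every entry before position `j` is bounded by a leading one
      have key : ∀ (t : ℕ) (m : Fin (n + 1)), m.val = t → m < j →
          (π m).val < (prefixValues k π).sup (· + 1) := by
        intro t
        induction t using Nat.strong_induction_on with
        | _ t ih =>
          intro m hmt hmj
          by_cases hmk : m.val < k
          · have : (π m).val ∈ prefixValues k π := (mem_prefixValues π _).2 ⟨m, hmk, rfl⟩
            exact Finset.le_sup (f := (· + 1)) this
          · have := hno m (not_lt.1 hmk) hmj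
            unfold IsLRMax at this
            push Not at this
            obtain ⟨l, hl, hle⟩ := this
            exact lt_of_le_of_lt hle (ih l.val (hmt ▸ hl) l rfl (hl.trans hmj))
      have hcard := card_le_card_of_injOn (s := univ.filter (fun i : Fin (n + 1) => i.val < j.val))
        (t := range ((prefixValues k π).sup (· + 1))) (fun i => (π i).val)
        (fun i hi => by
          simp only [coe_filter, mem_univ, true_and, Set.mem_ofPred_eq] at hi
          simpa using key i.val i rfl hi)
        ((Fin.val_injective.comp π.injective).injOn)
      rw [Fin.card_filter_val_lt, card_range] at hcard
      have := j.isLt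
      omega
  · rintro ⟨hkj, m₁, m₂, hsup⟩
    refine ⟨?_, ?_, hkj, ?_⟩
    · -- of three positions, two lie in the same increasing class
      rintro ⟨a, b, c, hab, hbc, h₁, h₂⟩
      have dec : ∀ x y, x < y → π y < π x →
          ¬ (x ∈ leadingWith n k j ↔ y ∈ leadingWith n k j) := by
        intro x y hxy hlt' hiff
        by_cases hx : x ∈ leadingWith n k j
        · exact lt_asymm hlt' (m₁ hx (hiff.1 hx) hxy)
        · exact lt_asymm hlt' (m₂ hx (fun h => hx (hiff.2 h)) hxy)
      have d₁ := dec a b hab h₂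
      have d₂ := dec b c hbc h₁
      have d₃ := dec a c (hab.trans hbc) (h₁.trans h₂)
      tauto
    · intro a b hab hb
      exact m₁ ((mem_leadingWith a).2 (Or.inl (lt_trans hab hb)))
        ((mem_leadingWith b).2 (Or.inl hb)) hab
    · intro m hkm hmj hmax
      have hsm : (prefixValues k π).sup (· + 1) ≤ (π m).val := by
        refine Finset.sup_le fun v hv => ?_
        obtain ⟨i, hi, rfl⟩ := (mem_prefixValues π v).1 hv
        exact hmax i (Fin.lt_def.2 (lt_of_lt_of_le hi hkm))
      have hm : m ∉ leadingWith n k j := by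
        rw [mem_leadingWith]; omega
      -- all values below the bound sit strictly before `m`
      have pos : ∀ i : Fin (n + 1), (π i).val < (prefixValues k π).sup (· + 1) → i < m := by
        intro i hi
        have him : π i < π m := Fin.lt_def.2 (lt_of_lt_of_le hi hsm)
        by_cases hP : i ∈ leadingWith n k j
        · rcases (mem_leadingWith i).1 hP with h | h
          · exact Fin.lt_def.2 (lt_of_lt_of_le h hkm)
          · obtain rfl : i = j := Fin.ext h
            exact absurd him (not_lt.2 (hlt m (ne_of_lt hmj)).le)
        · by_contra hcon
          rcases (not_lt.1 hcon).eq_or_lt with h | h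
          · rw [h] at him; exact lt_irrefl _ him
          · exact lt_asymm him (m₂ hm hP h)
      have hcard := card_le_card_of_injOn
        (s := univ.filter
          (fun v : Fin (n + 1) => v.val < (prefixValues k π).sup (· + 1)))
        (t := range m.val) (fun v => (π.symm v).val)
        (fun v hv => by
          simp only [coe_filter, mem_univ, true_and, Set.mem_ofPred_eq] at hv
          simpa using pos (π.symm v) (by simpa using hv))
        ((Fin.val_injective.comp π.symm.injective).injOn)
      rw [Fin.card_filter_val_lt, card_range] at hcard
      have := (π m).isLt
      omega

/-! ### Counting the pairs -/

/-- The number of pairs `(A, j)` with `A` a `k`-subset of `{0, …, n - 1}` and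
`k ≤ j ≤ 1 + max A`; the two halves of Pascal's recursion are the sets `A` without and with the
top element. -/
lemma sum_count (n k : ℕ) :
    ∑ A ∈ powersetCard k (range n), (Icc k (A.sup (· + 1))).card =
      k * n.choose (k + 1) + n.choose k := by
  induction n generalizing k with
  | zero =>
    cases k with
    | zero => simp
    | succ k => simp
  | succ n ih =>
    cases k with
    | zero => simp
    | succ k =>
      have hdisj : Disjoint (powersetCard (k + 1) (range n))
          ((powersetCard k (range n)).image (insert n)) := by
        rw [Finset.disjoint_left]
        intro A hA hA'
        obtain ⟨B, _, rfl⟩ := mem_image.1 hA'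
        have := (mem_powersetCard.1 hA).1 (mem_insert_self n B)
        simp at this
      have hinj : Set.InjOn (insert n) (powersetCard k (range n) : Set (Finset ℕ)) := by
        intro A hA B hB hAB
        have hA' : n ∉ A := fun h => by
          have := (mem_powersetCard.1 hA).1 h
          simp at this
        have hB' : n ∉ B := fun h => by
          have := (mem_powersetCard.1 hB).1 h
          simp at this
        rw [← erase_insert hA', ← erase_insert hB', hAB]
      have hterm : ∀ A ∈ powersetCard k (range n),
          (Icc (k + 1) ((insert n A).sup (· + 1))).card = n + 1 - k := by
        intro A hA
        have hs : A.sup (· + 1) ≤ n + 1 := Finset.sup_le fun v hv => by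
          have := mem_range.1 ((mem_powersetCard.1 hA).1 hv)
          omega
        rw [sup_insert, sup_eq_left.2 hs, Nat.card_Icc]
        omega
      rw [range_add_one, powersetCard_succ_insert (by simp), sum_union hdisj, ih,
        sum_image hinj, sum_congr rfl hterm, sum_const, card_powersetCard, card_range,
        smul_eq_mul, Nat.choose_succ_succ n k, Nat.choose_succ_succ n (k + 1)]
      have h := Nat.choose_succ_right_eq n k
      rcases le_or_gt k n with hkn | hkn
      · rw [show n + 1 - k = (n - k) + 1 by omega, mul_add, ← h]
        simp only [Nat.succ_eq_add_one]
        ring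
      · simp [Nat.choose_eq_zero_of_lt hkn, Nat.choose_eq_zero_of_lt (show n < k + 1 by omega),
          Nat.choose_eq_zero_of_lt (show n < k + 1 + 1 by omega)]

/-! ### Permutations and pairs -/

lemma mem_leadingWith_iff_value {n k : ℕ} (π : Equiv.Perm (Fin (n + 1))) (j x : Fin (n + 1))
    (hj : π j = Fin.last n) :
    x ∈ leadingWith n k j ↔ (π x).val ∈ prefixValues k π ∨ π x = Fin.last n := by
  rw [mem_leadingWith, mem_prefixValues, ← hj, π.apply_eq_iff_eq, Fin.ext_iff]
  refine or_congr_left ⟨fun h => ⟨x, h, rfl⟩, ?_⟩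
  rintro ⟨i, hi, h⟩
  rwa [← π.injective (Fin.ext h)]

/-- A shuffle is determined by the position of its maximum and its set of leading values. -/
lemma good_injective {n k : ℕ} (π ρ : Equiv.Perm (Fin (n + 1))) (j : Fin (n + 1))
    (hπ : π j = Fin.last n) (hρ : ρ j = Fin.last n)
    (hA : prefixValues k π = prefixValues k ρ)
    (π₁ : StrictMonoOn π (leadingWith n k j : Set (Fin (n + 1))))
    (π₂ : StrictMonoOn π (leadingWith n k j : Set (Fin (n + 1)))ᶜ)
    (ρ₁ : StrictMonoOn ρ (leadingWith n k j : Set (Fin (n + 1))))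
    (ρ₂ : StrictMonoOn ρ (leadingWith n k j : Set (Fin (n + 1)))ᶜ) : π = ρ := by
  have himg : π '' (leadingWith n k j : Set (Fin (n + 1))) = ρ '' (leadingWith n k j) := by
    ext v
    rw [Equiv.image_eq_preimage_symm, Equiv.image_eq_preimage_symm, Set.mem_preimage,
      Set.mem_preimage, mem_coe, mem_coe, mem_leadingWith_iff_value π j _ hπ,
      mem_leadingWith_iff_value ρ j _ hρ, hA]
    simp
  have himg' : π '' (leadingWith n k j : Set (Fin (n + 1)))ᶜ = ρ '' (leadingWith n k j)ᶜ := by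
    rw [Set.image_compl_eq π.bijective, Set.image_compl_eq ρ.bijective, himg]
  ext1 x
  by_cases hx : x ∈ leadingWith n k j
  · exact eqOn_of_strictMonoOn π₁ ρ₁ himg hx
  · exact eqOn_of_strictMonoOn π₂ ρ₂ himg' hx

/-- Every pair `(A, j)` with `k ≤ j ≤ n` is realized by a shuffle. -/
lemma good_surjective {n k j : ℕ} (A : Finset ℕ) (hA : A ∈ powersetCard k (range n))
    (hkj : k ≤ j) (hjn : j < n + 1) :
    ∃ π : Equiv.Perm (Fin (n + 1)), π ⟨j, hjn⟩ = Fin.last n ∧ prefixValues k π = A ∧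
      StrictMonoOn π (leadingWith n k j : Set (Fin (n + 1))) ∧
      StrictMonoOn π (leadingWith n k j : Set (Fin (n + 1)))ᶜ := by
  obtain ⟨hAn, hAk⟩ := mem_powersetCard.1 hA
  have hAn' : ∀ v ∈ A, v < n := fun v hv => mem_range.1 (hAn hv)
  have cardP : (leadingWith n k j).card = k + 1 := by
    have : (leadingWith n k j).image Fin.val = insert j (range k) := by
      ext v
      simp only [mem_image, mem_leadingWith, mem_insert, mem_range]
      constructor
      · rintro ⟨i, h, rfl⟩; tauto
      · intro h; exact ⟨⟨v, by omega⟩, by simpa using h.symm, rfl⟩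
    rw [← card_image_of_injective _ Fin.val_injective, this, card_insert_of_notMem (by simpa),
      card_range]
  let Q : Finset (Fin (n + 1)) := univ.filter (fun v => v.val ∈ insert n A)
  have cardQ : Q.card = k + 1 := by
    have : Q.image Fin.val = insert n A := by
      ext v
      simp only [Q, mem_image, mem_filter, mem_univ, true_and]
      constructor
      · rintro ⟨i, h, rfl⟩; exact h
      · intro h
        have : v < n + 1 := by
          rcases mem_insert.1 h with h | h
          · omega
          · have := hAn' v h; omega
        exact ⟨⟨v, this⟩, h, rfl⟩
    rw [← card_image_of_injective _ Fin.val_injective, this,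
      card_insert_of_notMem (fun h => (hAn' n h).ne rfl), hAk]
  obtain ⟨π, m₁, m₂, hQ⟩ := exists_perm_of_card_eq (leadingWith n k j) Q (cardP.trans cardQ.symm)
  have hjP : (⟨j, hjn⟩ : Fin (n + 1)) ∈ leadingWith n k j := by simp [mem_leadingWith]
  -- the largest position `j` of the class carries its largest value
  have hj : π ⟨j, hjn⟩ = Fin.last n := by
    have h1 : π.symm (Fin.last n) ∈ leadingWith n k j := by
      rw [← hQ]; simp [Q]
    have h2 : π.symm (Fin.last n) ≤ ⟨j, hjn⟩ := by
      have := (mem_leadingWith _).1 h1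
      rw [Fin.le_def]
      simp only
      omega
    have := m₁.monotoneOn h1 hjP h2
    rw [Equiv.apply_symm_apply] at this
    exact le_antisymm (Fin.le_last _) this
  refine ⟨π, hj, ?_, m₁, m₂⟩
  ext v
  rw [mem_prefixValues]
  constructor
  · rintro ⟨i, hi, rfl⟩
    have h1 : π i ∈ Q := (hQ i).2 ((mem_leadingWith i).2 (Or.inl hi))
    rcases mem_insert.1 (mem_filter.1 h1).2 with h | h
    · have : π i = π ⟨j, hjn⟩ := by rw [hj]; exact Fin.ext h
      have := congrArg Fin.val (π.injective this)
      simp only at this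
      omega
    · exact h
  · intro hv
    have hvn := hAn' v hv
    have h1 : π.symm ⟨v, by omega⟩ ∈ leadingWith n k j := by
      rw [← hQ]; simp [Q, hv]
    rcases (mem_leadingWith _).1 h1 with h | h
    · exact ⟨_, h, by simp⟩
    · have h3 : π.symm ⟨v, by omega⟩ = ⟨j, hjn⟩ := Fin.ext h
      rw [Equiv.symm_apply_eq, hj] at h3
      have := congrArg Fin.val h3
      simp only [Fin.val_last] at this
      omega

/-- the number of 321-avoiding permutations of size `N` whose first `k` entries
are increasing and which are won by the trigger at that prefix equals
`k * choose (N-1) (k+1) + choose (N-1) k`. -/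
theorem stmt13 {N : ℕ} (hN : 1 ≤ N) (k : ℕ) (hk : k ≤ N - 1) :
    Nat.card {π : Equiv.Perm (Fin N) // Avoids321 ⇑π ∧
        (∀ a b : Fin N, a < b → b.val < k → π a < π b) ∧ PosWin (by omega) k π} =
      k * Nat.choose (N - 1) (k + 1) + Nat.choose (N - 1) k := by
  obtain ⟨n, rfl⟩ : ∃ n, N = n + 1 := ⟨N - 1, by omega⟩
  rw [Nat.add_sub_cancel] at hk ⊢
  rw [← sum_count, ← card_sigma, ← Nat.card_eq_finsetCard]
  have hlast : ∀ π : Equiv.Perm (Fin (n + 1)), π (π.symm (Fin.last n)) = Fin.last n :=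
    fun π => π.apply_symm_apply _
  refine Nat.card_eq_of_bijective
    (fun π => ⟨⟨prefixValues k π.1, (π.1.symm (Fin.last n)).val⟩, ?_⟩) ⟨?_, ?_⟩
  · obtain ⟨π, hπ⟩ := π
    obtain ⟨h₁, h₂, h₃, h₄⟩ := (good_iff π _ (hlast π)).1 hπ
    refine mem_sigma.2 ⟨mem_powersetCard.2 ⟨?_, card_prefixValues hk π⟩, mem_Icc.2 ⟨h₁, h₄⟩⟩
    intro v hv
    obtain ⟨i, hi, rfl⟩ := (mem_prefixValues π v).1 hv
    have hne : π i ≠ Fin.last n := by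
      intro h
      rw [← h, Equiv.symm_apply_apply] at h₁
      omega
    exact mem_range.2 (Fin.lt_last_iff_ne_last.2 hne)
  · rintro ⟨π, hπ⟩ ⟨ρ, hρ⟩ h
    simp only [Subtype.mk.injEq, Sigma.mk.injEq, heq_eq_eq] at h
    obtain ⟨hA, hj⟩ := h
    have hj' := Fin.ext hj
    have hρj : ρ (π.symm (Fin.last n)) = Fin.last n := by rw [hj', hlast]
    obtain ⟨-, π₁, π₂, -⟩ := (good_iff π _ (hlast π)).1 hπ
    obtain ⟨-, ρ₁, ρ₂, -⟩ := (good_iff ρ _ hρj).1 hρ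
    exact Subtype.ext (good_injective π ρ _ (hlast π) hρj hA π₁ π₂ ρ₁ ρ₂)
  · rintro ⟨⟨A, j⟩, h⟩
    obtain ⟨hA, hj⟩ := mem_sigma.1 h
    obtain ⟨hkj, hjs⟩ := mem_Icc.1 hj
    have hs : A.sup (· + 1) ≤ n := Finset.sup_le fun v hv =>
      mem_range.1 ((mem_powersetCard.1 hA).1 hv)
    have hjn : j < n + 1 := Nat.lt_succ_of_le (le_trans hjs hs)
    obtain ⟨π, hπj, rfl, m₁, m₂⟩ := good_surjective A hA hkj hjn
    refine ⟨⟨π, (good_iff π _ hπj).2 ⟨hkj, m₁, m₂, hjs⟩⟩, ?_⟩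
    have : π.symm (Fin.last n) = ⟨j, hjn⟩ := by rw [Equiv.symm_apply_eq, hπj]
    simp [this]
end

section
/- Let π be a 321-avoiding permutation of size N−1 and let c ∈ {1,…,N}. Let π*c denote the permutation of size N whose last entry is c and whose first N−1 entries are obtained from π_1,…,π_{N−1} by increasing every entry that is ≥ c by 1. Then π*c avoids 321 if and only if c > a for every inversion of π by values, i.e., for every pair of values b > a such that b appears before a in π. -/
/-- Append the value `c` (as an element of `{1,…,N+1}`, 0-indexed `Fin (N+1)`) at the end of
the one-line notation of `π`: every old entry whose value is `≥ c` is increased by 1 and the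
last entry of the result is `c`. -/
def appendEntry {N : ℕ} (π : Fin N → Fin N) (c : Fin (N + 1)) : Fin (N + 1) → Fin (N + 1) :=
  fun i => if h : i.val < N then c.succAbove (π ⟨i.val, h⟩) else c

theorem appendEntry_castSucc {N : ℕ} (π : Fin N → Fin N) (c : Fin (N + 1)) (i : Fin N) :
    appendEntry π c i.castSucc = c.succAbove (π i) := by
  simp [appendEntry]

theorem appendEntry_last {N : ℕ} (π : Fin N → Fin N) (c : Fin (N + 1)) :
    appendEntry π c (Fin.last N) = c := by
  simp [appendEntry]

/-- for a 321-avoiding `π`, the extension `π * c` avoids 321 iff `c > a` for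
every inversion of `π` by values, i.e. for every pair of positions `i < j` with
`π i > π j` one has `c > π j` (as values). -/
theorem stmt14 {N : ℕ} (π : Equiv.Perm (Fin N)) (c : Fin (N + 1))
    (h321 : Avoids321 ⇑π) :
    Avoids321 (appendEntry ⇑π c) ↔
      ∀ i j : Fin N, i < j → π j < π i → (π j).val < c.val := by
  constructor
  · intro h i j hij hπ
    by_contra hc
    refine h ⟨i.castSucc, j.castSucc, Fin.last N, by simpa using hij, Fin.castSucc_lt_last j,
      ?_, ?_⟩
    · rw [appendEntry_castSucc, appendEntry_last, Fin.lt_succAbove_iff_le_castSucc, Fin.le_def]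
      simpa using hc
    · rw [appendEntry_castSucc, appendEntry_castSucc]
      exact Fin.strictMono_succAbove c hπ
  · rintro h ⟨i, j, k, hij, hjk, hkj, hji⟩
    -- Only the last of the three positions can be the new one.
    obtain ⟨j, rfl⟩ := Fin.exists_castSucc_eq.mpr (hjk.trans_le (Fin.le_last k)).ne
    obtain ⟨i, rfl⟩ :=
      Fin.exists_castSucc_eq.mpr (hij.trans (Fin.castSucc_lt_last j)).ne
    rw [appendEntry_castSucc, appendEntry_castSucc,
      (Fin.strictMono_succAbove c).lt_iff_lt] at hji
    rw [Fin.castSucc_lt_castSucc_iff] at hij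
    induction k using Fin.lastCases with
    | last =>
      rw [appendEntry_castSucc, appendEntry_last, Fin.lt_succAbove_iff_le_castSucc,
        Fin.le_def, Fin.val_castSucc] at hkj
      exact absurd (h i j hij hji) (not_lt.mpr hkj)
    | cast k =>
      rw [appendEntry_castSucc, appendEntry_castSucc,
        (Fin.strictMono_succAbove c).lt_iff_lt] at hkj
      exact h321 ⟨i, j, k, hij, Fin.castSucc_lt_castSucc_iff.mp hjk, hkj, hji⟩
end

section
/- Let π be a 312-avoiding permutation of size N−1 and let c ∈ {1,…,N}. Let π*c denote the permutation of size N whose last entry is c and whose first N−1 entries are obtained from π_1,…,π_{N−1} by increasing every entry that is ≥ c by 1. Then π*c avoids 312 if and only if there is no inversion of π by values (b, a) (i.e., values b > a with b appearing before a in π) such that a < c ≤ b. -/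
/-- for a 312-avoiding `π`, the extension `π * c` avoids 312 iff there is no
inversion of `π` by values `(b, a)` (positions `i < j` with `b = π i > π j = a`) such
that `a < c ≤ b`. -/
theorem stmt15 {N : ℕ} (π : Equiv.Perm (Fin N)) (c : Fin (N + 1))
    (h312 : Avoids312 ⇑π) :
    Avoids312 (appendEntry ⇑π c) ↔
      ¬ ∃ i j : Fin N, i < j ∧ π j < π i ∧ (π j).val < c.val ∧ c.val ≤ (π i).val := by
  unfold Avoids312 at h312 ⊢
  refine not_congr ⟨?_, ?_⟩
  · rintro ⟨i, j, k, hij, hjk, h1, h2⟩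
    -- `i` and `j` precede `k`, so neither is the last position.
    obtain ⟨i, rfl⟩ := Fin.exists_castSucc_eq.2 (((hij.trans hjk).trans_le (Fin.le_last k)).ne)
    obtain ⟨j, rfl⟩ := Fin.exists_castSucc_eq.2 ((hjk.trans_le (Fin.le_last k)).ne)
    rw [Fin.castSucc_lt_castSucc_iff] at hij
    induction k using Fin.lastCases with
    | last =>
      rw [appendEntry_castSucc, appendEntry_last, Fin.succAbove_lt_iff_castSucc_lt] at h1
      rw [appendEntry_castSucc, appendEntry_last, Fin.lt_succAbove_iff_le_castSucc] at h2
      rw [Fin.lt_def] at h1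
      rw [Fin.le_def] at h2
      exact ⟨i, j, hij, Fin.lt_def.2 (h1.trans_le h2), h1, h2⟩
    | cast k =>
      simp only [appendEntry_castSucc, Fin.succAbove_lt_succAbove_iff] at h1 h2
      exact absurd ⟨i, j, k, hij, Fin.castSucc_lt_castSucc_iff.1 hjk, h1, h2⟩ h312
  · rintro ⟨i, j, hij, -, h1, h2⟩
    refine ⟨i.castSucc, j.castSucc, Fin.last N, Fin.castSucc_lt_castSucc_iff.2 hij,
      Fin.castSucc_lt_last j, ?_, ?_⟩
    · rw [appendEntry_castSucc, appendEntry_last, Fin.succAbove_lt_iff_castSucc_lt]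
      exact h1
    · rw [appendEntry_castSucc, appendEntry_last, Fin.lt_succAbove_iff_le_castSucc]
      exact h2
end

section
/- For every N ≥ 1 there is a bijection f from the set of 321-avoiding permutations of size N onto the set of 312-avoiding permutations of size N such that: (a) for every π, the set of positions of the left-to-right maxima of f(π) equals the set of positions of the left-to-right maxima of π (in particular the position of the value N is preserved); and (b) for all π, π′ and all 1 ≤ i ≤ N, the i-th prefix flattenings of π and π′ are equal if and only if the i-th prefix flattenings of f(π) and f(π′) are equal. (Hence the prefix trees of the 321-avoiding and 312-avoiding best-choice games are isomorphic.) -/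
namespace PrefixTree

open Finset

/-! ### Words and Catalan words -/

/-- Lehmer words: `w i` is at most `i`, as for the number of entries preceding position `i`
and smaller than the entry there. -/
def Leh (w : ℕ → ℕ) : Prop := ∀ i, w i ≤ i

/-- Infinite Lehmer words of 321-avoiders: the code at a non-record is smaller than every
later code (see `w321_iff`). -/
def W321 (w : ℕ → ℕ) : Prop := ∀ i j, i < j → w i < i → w i < w j

/-- Infinite Lehmer words of 312-avoiders: the intervals `[w j, j]` are pairwise nested or
disjoint (see `w312_iff`). -/
def W312 (w : ℕ → ℕ) : Prop := ∀ i j, i < j → w j ≤ w i ∨ i < w j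

/-- Catalan words: they start at `0` and increase by at most one at each step. -/
def Cat (a : ℕ → ℕ) : Prop := a 0 = 0 ∧ ∀ j, a (j + 1) ≤ a j + 1

/-- The Catalan word of a 321-avoiding Lehmer word. Up to a shift by two, `enc321 w j` is the
number of children, in the prefix tree, of the prefix of length `j + 1`. -/
def enc321 (w : ℕ → ℕ) : ℕ → ℕ
  | 0 => 0
  | j + 1 => if w (j + 1) = j + 1 then enc321 w j + 1 else j - w (j + 1)

/-- The inverse of `enc321` on Catalan words. -/
def dec321 (a : ℕ → ℕ) : ℕ → ℕ
  | 0 => 0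
  | j + 1 => if a (j + 1) = a j + 1 then j + 1 else j - a (j + 1)

/-- The Catalan word of a 312-avoiding Lehmer word: `enc312 w j` is the number of
steps `i ↦ w i - 1` that lead from `j` to a zero of `w`. The guard `w j ≤ j` holds for Lehmer words and serves termination only. -/
def enc312 (w : ℕ → ℕ) (j : ℕ) : ℕ :=
  if h : w j ≠ 0 ∧ w j ≤ j then enc312 w (w j - 1) + 1 else 0
termination_by j
decreasing_by omega

/-- The inverse of `enc312` on Catalan words: one plus the last position `t < j` with
`a t < a j`, and `0` if there is none. -/
def dec312 (a : ℕ → ℕ) (j : ℕ) : ℕ := Nat.findGreatest (fun t => a (t - 1) < a j) j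

/-! ### Catalan words and 321 -/

/-- A lower bound for the Catalan word from any strict upper bound `v` on the non-record codes
up to `j`. -/
lemma enc321_lower {w : ℕ → ℕ} (j v : ℕ)
    (h : ∀ i, i ≤ j → w i < i → w i < v) (hl : Leh w) : j ≤ enc321 w j + v := by
  induction j with
  | zero => omega
  | succ j ih =>
    have := ih (fun i hi => h i (by omega))
    have h1 := h (j + 1) le_rfl
    have h2 := hl (j + 1)
    rw [enc321]
    split_ifs <;> omega

/-- A non-record step of a 321-avoiding word does not increase its Catalan word. -/
lemma enc321_nonrec {w : ℕ → ℕ} (hl : Leh w) (hw : W321 w) (j : ℕ) (h : w (j + 1) ≠ j + 1) :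
    enc321 w (j + 1) ≤ enc321 w j := by
  have h1 := enc321_lower j (w (j + 1)) (fun i hi hi' => hw i (j + 1) (by omega) hi') hl
  rw [enc321, if_neg h]
  omega

lemma enc321_rec {w : ℕ → ℕ} (j : ℕ) (h : w (j + 1) = j + 1) :
    enc321 w (j + 1) = enc321 w j + 1 := by
  rw [enc321, if_pos h]

lemma enc321_cat {w : ℕ → ℕ} (hl : Leh w) (hw : W321 w) : Cat (enc321 w) := by
  refine ⟨rfl, fun j => ?_⟩
  by_cases h : w (j + 1) = j + 1
  · exact (enc321_rec j h).le
  · exact (enc321_nonrec hl hw j h).trans (Nat.le_succ _)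

lemma enc321_rec_iff {w : ℕ → ℕ} (hl : Leh w) (hw : W321 w) (j : ℕ) :
    w (j + 1) = j + 1 ↔ enc321 w (j + 1) = enc321 w j + 1 := by
  refine ⟨enc321_rec j, fun h => ?_⟩
  by_contra h'
  have := enc321_nonrec hl hw j h'
  omega

lemma dec321_enc321 {w : ℕ → ℕ} (hl : Leh w) (hw : W321 w) : dec321 (enc321 w) = w := by
  funext j
  cases j with
  | zero => have := hl 0; simp only [dec321]; omega
  | succ j =>
    rw [dec321]
    by_cases h : w (j + 1) = j + 1
    · rw [if_pos ((enc321_rec_iff hl hw j).1 h), h]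
    · rw [if_neg (fun h' => h ((enc321_rec_iff hl hw j).2 h')), enc321, if_neg h]
      have := hl (j + 1)
      omega

lemma Cat.le_add {a : ℕ → ℕ} (ha : Cat a) (i d : ℕ) : a (i + d) ≤ a i + d := by
  induction d with
  | zero => simp
  | succ d ih => have := ha.2 (i + d); rw [← add_assoc]; omega

lemma Cat.le_self {a : ℕ → ℕ} (ha : Cat a) (i : ℕ) : a i ≤ i := by
  have := ha.le_add 0 i
  rw [zero_add, ha.1] at this
  omega

lemma dec321_leh (a : ℕ → ℕ) : Leh (dec321 a) := by
  intro j
  cases j with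
  | zero => simp [dec321]
  | succ j => rw [dec321]; split_ifs <;> omega

lemma enc321_dec321 {a : ℕ → ℕ} (ha : Cat a) : enc321 (dec321 a) = a := by
  funext j
  induction j with
  | zero => simp [enc321, ha.1]
  | succ j ih =>
    have h1 := ha.2 j
    have h2 := ha.le_self j
    rw [enc321, ih, dec321]
    split_ifs <;> omega

lemma dec321_w321 {a : ℕ → ℕ} (ha : Cat a) : W321 (dec321 a) := by
  intro i j hij hi
  obtain _ | i := i
  · omega
  obtain _ | j := j
  · omega
  have h1 := ha.2 i
  have h2 := ha.le_self i
  have h3 := ha.2 j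
  have h4 := ha.le_add (i + 1) (j - (i + 1))
  rw [show i + 1 + (j - (i + 1)) = j by omega] at h4
  rw [dec321] at hi ⊢
  rw [dec321]
  split_ifs at * <;> omega

lemma enc321_congr {w w' : ℕ → ℕ} {k : ℕ} (h : ∀ i < k, w i = w' i) :
    ∀ i < k, enc321 w i = enc321 w' i := by
  intro i hi
  induction i with
  | zero => rfl
  | succ i ih => rw [enc321, enc321, ih (by omega), h _ hi]

lemma dec321_congr {a a' : ℕ → ℕ} {k : ℕ} (h : ∀ i < k, a i = a' i) :
    ∀ i < k, dec321 a i = dec321 a' i := by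
  intro i hi
  cases i with
  | zero => rfl
  | succ i => rw [dec321, dec321, h i (by omega), h _ hi]

/-! ### Catalan words and 312 -/

lemma enc312_zero {w : ℕ → ℕ} {j : ℕ} (h : w j = 0) : enc312 w j = 0 := by
  rw [enc312, dif_neg (by omega)]

lemma enc312_pos {w : ℕ → ℕ} (hl : Leh w) {j : ℕ} (h : w j ≠ 0) :
    enc312 w j = enc312 w (w j - 1) + 1 := by
  rw [enc312, dif_pos ⟨h, hl j⟩]

/-- The Catalan word stays at or above its value at `j` on the interval `[w j, j]`. -/
lemma enc312_le {w : ℕ → ℕ} (hl : Leh w) (hw : W312 w) (j t : ℕ) (h1 : w j ≤ t) (h2 : t < j) :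
    enc312 w j ≤ enc312 w t := by
  induction t using Nat.strong_induction_on with
  | _ t ih =>
    have h3 : w j ≤ w t := (hw t j h2).resolve_right (by omega)
    by_cases h0 : w j = 0
    · rw [enc312_zero h0]; exact Nat.zero_le _
    by_cases he : w t = w j
    · rw [enc312_pos hl h0, enc312_pos hl (he ▸ h0 : w t ≠ 0), he]
    · have := hl t
      have h4 := ih (w t - 1) (by omega) (by omega) (by omega)
      rw [enc312_pos hl (by omega : w t ≠ 0)]
      omega

lemma enc312_rec {w : ℕ → ℕ} (hl : Leh w) (j : ℕ) (h : w (j + 1) = j + 1) :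
    enc312 w (j + 1) = enc312 w j + 1 := by
  rw [enc312_pos hl (by omega), h, Nat.add_sub_cancel]

lemma enc312_nonrec {w : ℕ → ℕ} (hl : Leh w) (hw : W312 w) (j : ℕ) (h : w (j + 1) ≠ j + 1) :
    enc312 w (j + 1) ≤ enc312 w j := by
  have := hl (j + 1)
  exact enc312_le hl hw _ _ (by omega) (by omega)

lemma enc312_cat {w : ℕ → ℕ} (hl : Leh w) (hw : W312 w) : Cat (enc312 w) := by
  refine ⟨enc312_zero (Nat.le_zero.1 (hl 0)), fun j => ?_⟩
  by_cases h : w (j + 1) = j + 1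
  · exact (enc312_rec hl j h).le
  · exact (enc312_nonrec hl hw j h).trans (Nat.le_succ _)

lemma enc312_rec_iff {w : ℕ → ℕ} (hl : Leh w) (hw : W312 w) (j : ℕ) :
    w (j + 1) = j + 1 ↔ enc312 w (j + 1) = enc312 w j + 1 := by
  refine ⟨enc312_rec hl j, fun h => ?_⟩
  by_contra h'
  have := enc312_nonrec hl hw j h'
  omega

lemma dec312_leh (a : ℕ → ℕ) : Leh (dec312 a) := fun _ => Nat.findGreatest_le _

lemma dec312_lt {a : ℕ → ℕ} {j : ℕ} (h : dec312 a j ≠ 0) : a (dec312 a j - 1) < a j :=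
  Nat.findGreatest_of_ne_zero (P := fun t => a (t - 1) < a j) rfl h

lemma le_dec312 {a : ℕ → ℕ} {j t : ℕ} (ht : t < j) (h : a t < a j) : t + 1 ≤ dec312 a j :=
  Nat.le_findGreatest (P := fun t => a (t - 1) < a j) ht (by simpa using h)

lemma dec312_enc312 {w : ℕ → ℕ} (hl : Leh w) (hw : W312 w) : dec312 (enc312 w) = w := by
  funext j
  have h0 := hl j
  have h0' := dec312_leh (enc312 w) j
  apply le_antisymm
  · by_contra h
    have h1 := dec312_lt (a := enc312 w) (j := j) (by omega)
    have h2 := enc312_le hl hw j (dec312 (enc312 w) j - 1) (by omega) (by omega)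
    omega
  · by_cases h : w j = 0
    · omega
    · have h1 := le_dec312 (a := enc312 w) (j := j) (t := w j - 1) (by omega)
        (by rw [enc312_pos hl h]; omega)
      omega

lemma dec312_w312 (a : ℕ → ℕ) : W312 (dec312 a) := by
  intro i j hij
  by_contra! h
  have h1 : a j ≤ a i := by
    by_contra! h'
    have := le_dec312 hij h'
    omega
  have h2 := dec312_lt (a := a) (j := j) (by omega)
  have h3 := le_dec312 (a := a) (j := i) (t := dec312 a j - 1) (by omega) (by omega)
  omega

lemma enc312_dec312 {a : ℕ → ℕ} (ha : Cat a) : enc312 (dec312 a) = a := by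
  funext j
  induction j using Nat.strong_induction_on with
  | _ j ih =>
    have hle := dec312_leh a j
    by_cases h0 : dec312 a j = 0
    · rw [enc312_zero h0]
      by_contra h
      obtain _ | j := j
      · exact h ha.1.symm
      · have := le_dec312 (a := a) (j := j + 1) (t := 0) (by omega) (by rw [ha.1]; omega)
        omega
    · rw [enc312_pos (dec312_leh a) h0, ih _ (by omega)]
      have h1 := dec312_lt h0
      have h2 := ha.2 (dec312 a j - 1)
      rw [Nat.sub_add_cancel (by omega)] at h2
      -- `a j` cannot exceed the value just after the last smaller one, so the step is exactly one
      have h3 : a j ≤ a (dec312 a j) := by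
        by_contra! h'
        rcases hle.eq_or_lt with he | hlt
        · rw [he] at h'; omega
        · have := le_dec312 hlt h'
          omega
      omega

lemma enc312_congr {w w' : ℕ → ℕ} {k : ℕ} (h : ∀ i < k, w i = w' i) :
    ∀ i < k, enc312 w i = enc312 w' i := by
  intro i
  induction i using Nat.strong_induction_on with
  | _ i ih =>
    intro hi
    rw [enc312, enc312.eq_def w']
    simp only [h i hi]
    split_ifs with hc
    · rw [ih _ (by omega) (by omega)]
    · rfl

lemma dec312_congr {a a' : ℕ → ℕ} {k : ℕ} (h : ∀ i < k, a i = a' i) :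
    ∀ i < k, dec312 a i = dec312 a' i := by
  intro i hi
  have key : ∀ b b' : ℕ → ℕ, (∀ i < k, b i = b' i) → dec312 b i ≤ dec312 b' i := by
    intro b b' hb
    by_cases h0 : dec312 b i = 0
    · omega
    · have h1 := dec312_lt h0
      have h2 := dec312_leh b i
      rw [hb _ (by omega), hb _ hi] at h1
      have := le_dec312 (by omega) h1
      omega
  exact le_antisymm (key a a' h) (key a' a fun i hi => (h i hi).symm)

/-! ### The word bijection -/

/-- The bijection from 321-avoiding to 312-avoiding Lehmer words. -/
def toW312 (w : ℕ → ℕ) : ℕ → ℕ := dec312 (enc321 w)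

/-- The inverse of `toW312`. -/
def toW321 (w : ℕ → ℕ) : ℕ → ℕ := dec321 (enc312 w)

lemma toW321_toW312 {w : ℕ → ℕ} (hl : Leh w) (hw : W321 w) : toW321 (toW312 w) = w := by
  rw [toW321, toW312, enc312_dec312 (enc321_cat hl hw), dec321_enc321 hl hw]

lemma toW312_toW321 {w : ℕ → ℕ} (hl : Leh w) (hw : W312 w) : toW312 (toW321 w) = w := by
  rw [toW321, toW312, enc321_dec321 (enc312_cat hl hw), dec312_enc312 hl hw]

lemma toW312_rec_iff {w : ℕ → ℕ} (hl : Leh w) (hw : W321 w) (i : ℕ) :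
    w i = i ↔ toW312 w i = i := by
  have hl' : Leh (toW312 w) := dec312_leh _
  cases i with
  | zero => have := hl 0; have := hl' 0; omega
  | succ j =>
    rw [enc321_rec_iff hl hw, enc312_rec_iff hl' (dec312_w312 _), toW312,
      enc312_dec312 (enc321_cat hl hw)]

lemma toW312_congr_iff {w w' : ℕ → ℕ} (hl : Leh w) (hw : W321 w) (hl' : Leh w') (hw' : W321 w')
    (k : ℕ) : (∀ i < k, w i = w' i) ↔ ∀ i < k, toW312 w i = toW312 w' i := by
  refine ⟨fun h => dec312_congr (enc321_congr h), fun h => ?_⟩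
  have := dec321_congr (enc312_congr h)
  rw [← toW321_toW312 hl hw, ← toW321_toW312 hl' hw']
  exact this

/-! ### Lehmer words of injective sequences -/

/-- The Lehmer word of a sequence: the number of smaller earlier entries. -/
def lehmer (p : ℕ → ℕ) (i : ℕ) : ℕ := #{t ∈ range i | p t < p i}

lemma lehmer_le (p : ℕ → ℕ) : Leh (lehmer p) := fun i =>
  (card_filter_le _ _).trans (card_range i).le

lemma lehmer_rec_iff {p : ℕ → ℕ} (i : ℕ) : lehmer p i = i ↔ ∀ t < i, p t < p i := by
  have := card_filter_eq_iff (s := range i) (p := fun t => p t < p i)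
  rw [card_range] at this
  rw [lehmer, this]
  simp

/-- If `p i < p j` with `i < j`, the code at `j` counts `i` and all that the code at `i` counts. -/
lemma lehmer_lt_of_lt {p : ℕ → ℕ} {i j : ℕ} (hij : i < j) (h : p i < p j) :
    lehmer p i < lehmer p j := by
  apply card_lt_card
  rw [Finset.ssubset_iff_of_subset]
  · exact ⟨i, by simp [hij, h], by simp⟩
  · intro t
    simp only [mem_filter, mem_range]
    omega

lemma lehmer_le_of {p : ℕ → ℕ} {i j : ℕ} (h : ∀ t < j, p t < p j → t < i ∧ p t < p i) :
    lehmer p j ≤ lehmer p i := by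
  apply card_le_card
  intro t
  simp only [mem_filter, mem_range]
  exact fun ht => h t ht.1 ht.2

lemma w321_iff {p : ℕ → ℕ} (hp : p.Injective) :
    W321 (lehmer p) ↔ ∀ i j k, i < j → j < k → ¬ (p k < p j ∧ p j < p i) := by
  constructor
  · intro hw i j k hij hjk hpat
    -- with `k` minimal, every earlier entry below `p k` stands before `j`
    have hex : ∃ k, j < k ∧ p k < p j := ⟨k, hjk, hpat.1⟩
    obtain ⟨h1, h2⟩ := Nat.find_spec hex
    have hmin : ∀ t, t < Nat.find hex → ¬ (j < t ∧ p t < p j) := fun t => Nat.find_min hex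
    generalize Nat.find hex = m at *
    have hj : lehmer p j < j := lt_of_le_of_ne (lehmer_le p j) fun h => by
      have := (lehmer_rec_iff j).1 h i hij
      omega
    have h3 := hw j m h1 hj
    have h4 : lehmer p m ≤ lehmer p j := lehmer_le_of fun t ht hpt => by
      have := hmin t ht
      have hne : t ≠ j := by rintro rfl; omega
      omega
    omega
  · intro h i j hij hi
    have h1 : ¬ ∀ t < i, p t < p i := fun h' => hi.ne ((lehmer_rec_iff i).2 h')
    push Not at h1
    obtain ⟨t, ht, hpt⟩ := h1
    have h2 := h t i j ht hij
    have h3 := hp.ne ht.ne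
    have h4 := hp.ne hij.ne
    exact lehmer_lt_of_lt hij (by omega)

lemma w312_iff {p : ℕ → ℕ} (hp : p.Injective) :
    W312 (lehmer p) ↔ ∀ i j k, i < j → j < k → ¬ (p j < p k ∧ p k < p i) := by
  constructor
  · intro hw i j k hij hjk hpat
    -- with `j` maximal, no entry strictly between `j` and `k` lies below `p k`
    have hs : (({t ∈ range k | i < t ∧ p t < p k} : Finset ℕ)).Nonempty :=
      ⟨j, by simp only [mem_filter, mem_range]; omega⟩
    obtain ⟨m, hm, hmax⟩ := exists_max_image _ id hs
    simp only [mem_filter, mem_range, id] at hm hmax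
    have h1 := lehmer_lt_of_lt hm.1 hm.2.2
    have h2 : lehmer p k ≤ m := by
      have : ({t ∈ range k | p t < p k} : Finset ℕ) ⊆ (range (m + 1)).erase i := by
        intro t
        simp only [mem_filter, mem_range, mem_erase]
        intro ht
        have := hmax t
        refine ⟨?_, by omega⟩
        rintro rfl
        omega
      have := card_le_card this
      rw [card_erase_of_mem (by simp; omega), card_range] at this
      exact this
    have := hw m k hm.1
    omega
  · intro h i j hij
    by_contra! hcon
    rcases lt_or_gt_of_ne (hp.ne hij.ne) with hlt | hgt
    · -- if `p` were below `p j` on all of `[0, i]`, the code at `j` would exceed `i`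
      have h1 : range (i + 1) ⊆ {t ∈ range j | p t < p j} := by
        intro t
        simp only [mem_filter, mem_range]
        intro ht
        refine ⟨by omega, ?_⟩
        by_contra hge
        have hne := hp.ne (show t ≠ j by omega)
        have hti : t ≠ i := by rintro rfl; omega
        exact h t i j (by omega) hij ⟨hlt, by omega⟩
      have := card_le_card h1
      rw [card_range] at this
      have h2 : lehmer p j ≤ i := hcon.2
      rw [lehmer] at h2
      omega
    · have : lehmer p j ≤ lehmer p i := lehmer_le_of fun t ht hpt => by
        have := h i t j
        have hne : t ≠ i := by rintro rfl; omega
        omega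
      omega

/-- Prefixes of two injective sequences have the same relative order exactly when their Lehmer
words agree: the entries below the last one form an initial segment of the earlier entries, and
initial segments of equal size coincide. -/
lemma order_iff_lehmer {p q : ℕ → ℕ} (hp : p.Injective) (hq : q.Injective) (k : ℕ) :
    (∀ a < k, ∀ b < k, (p a < p b ↔ q a < q b)) ↔ ∀ i < k, lehmer p i = lehmer q i := by
  constructor
  · intro h i hi
    unfold lehmer
    congr 1
    apply filter_congr
    intro t ht
    rw [mem_range] at ht
    exact h t (by omega) i hi
  · intro h
    induction k with
    | zero => intro a ha; omega
    | succ k ih =>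
      have ih := ih fun i hi => h i (by omega)
      have hk : ({t ∈ range k | p t < p k} : Finset ℕ) = {t ∈ range k | q t < q k} := by
        have hcard := h k (by omega)
        unfold lehmer at hcard
        by_cases hsub : ({t ∈ range k | p t < p k} : Finset ℕ) ⊆ {t ∈ range k | q t < q k}
        · exact eq_of_subset_of_card_le hsub hcard.ge
        · refine (eq_of_subset_of_card_le ?_ hcard.le).symm
          obtain ⟨s, hs, hs'⟩ := not_subset.1 hsub
          intro t ht
          simp only [mem_filter, mem_range] at *
          refine ⟨ht.1, ?_⟩
          have := ih t ht.1 s hs.1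
          omega
      have hk' : ∀ t < k, (p t < p k ↔ q t < q k) := by
        intro t ht
        have := Finset.ext_iff.1 hk t
        simpa [ht] using this
      intro a ha b hb
      rcases (Nat.lt_succ_iff_lt_or_eq.1 ha) with ha | rfl <;>
        rcases (Nat.lt_succ_iff_lt_or_eq.1 hb) with hb | rfl
      · exact ih a ha b hb
      · exact hk' a ha
      · have h1 := hk' b hb
        have h2 := hp.ne hb.ne
        have h3 := hq.ne hb.ne
        omega
      · simp

/-! ### Permutations of `Fin N` -/

/-- A permutation of `Fin N` as a sequence on `ℕ`, extended by the identity. The extension adds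
only left-to-right maxima. -/
def seqOf {N : ℕ} (π : Equiv.Perm (Fin N)) (i : ℕ) : ℕ := if h : i < N then π ⟨i, h⟩ else i

variable {N : ℕ}

lemma seqOf_lt (π : Equiv.Perm (Fin N)) {i : ℕ} (h : i < N) : seqOf π i = π ⟨i, h⟩ := dif_pos h

lemma seqOf_fin (π : Equiv.Perm (Fin N)) (i : Fin N) : seqOf π i = π i := seqOf_lt π i.2

lemma seqOf_ge (π : Equiv.Perm (Fin N)) {i : ℕ} (h : N ≤ i) : seqOf π i = i := dif_neg (by omega)

lemma seqOf_lt_iff (π : Equiv.Perm (Fin N)) (i : ℕ) : seqOf π i < N ↔ i < N := by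
  by_cases h : i < N
  · rw [seqOf_lt π h]; simp [h]
  · rw [seqOf_ge π (by omega)]

lemma seqOf_injective (π : Equiv.Perm (Fin N)) : (seqOf π).Injective := by
  intro i j hij
  have h1 := seqOf_lt_iff π i
  have h2 := seqOf_lt_iff π j
  by_cases hi : i < N
  · have hj : j < N := by omega
    rw [seqOf_lt π hi, seqOf_lt π hj] at hij
    simpa using π.injective (Fin.ext hij)
  · rwa [seqOf_ge π (by omega), seqOf_ge π (by omega)] at hij

/-- The Lehmer word of a permutation, continued by records. -/
def code (π : Equiv.Perm (Fin N)) : ℕ → ℕ := lehmer (seqOf π)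

lemma code_ge (π : Equiv.Perm (Fin N)) {i : ℕ} (h : N ≤ i) : code π i = i := by
  refine (lehmer_rec_iff i).2 fun t ht => ?_
  have := seqOf_lt_iff π t
  have := seqOf_ge π h
  by_cases ht' : t < N
  · omega
  · rw [seqOf_ge π (by omega : N ≤ t)]; omega

lemma code_rec_iff (π : Equiv.Perm (Fin N)) (m : Fin N) : IsLRMax π m ↔ code π m = m := by
  rw [code, lehmer_rec_iff]
  constructor
  · intro h t ht
    have := h ⟨t, by omega⟩ ht
    rw [seqOf_fin, seqOf_lt π (by omega : t < N)]
    exact this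
  · intro h l hl
    have := h l hl
    rwa [seqOf_fin, seqOf_fin] at this

lemma prefixEq_iff (π σ : Equiv.Perm (Fin N)) (k : ℕ) (h : k ≤ N) :
    PrefixEq π σ k h h ↔ ∀ i < k, code π i = code σ i := by
  unfold code
  rw [← order_iff_lehmer (seqOf_injective π) (seqOf_injective σ)]
  constructor
  · intro hp a ha b hb
    have := hp ⟨a, ha⟩ ⟨b, hb⟩
    rw [seqOf_lt π (by omega : a < N), seqOf_lt π (by omega : b < N),
      seqOf_lt σ (by omega : a < N), seqOf_lt σ (by omega : b < N)]
    exact this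
  · intro hp a b
    have := hp a a.2 b b.2
    rwa [seqOf_lt π (by omega : (a : ℕ) < N), seqOf_lt π (by omega : (b : ℕ) < N),
      seqOf_lt σ (by omega : (a : ℕ) < N), seqOf_lt σ (by omega : (b : ℕ) < N)] at this

lemma eq_of_code {π σ : Equiv.Perm (Fin N)} (h : ∀ i < N, code π i = code σ i) : π = σ := by
  have h1 := (prefixEq_iff π σ N le_rfl).2 h
  have h2 : StrictMono (fun x => σ (π.symm x)) := by
    intro x y hxy
    have := h1 (π.symm x) (π.symm y)
    simpa [hxy] using this
  have h3 := h2.eq_id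
  ext i
  have := congrFun h3 (π i)
  simp only [Equiv.symm_apply_apply, id] at this
  rw [this]

/-- Every Lehmer word continued by records is the code of a permutation, as the code is injective
and there are `N!` such words. -/
lemma exists_code {w : ℕ → ℕ} (hl : Leh w) (hN : ∀ i, N ≤ i → w i = i) :
    ∃ π : Equiv.Perm (Fin N), code π = w := by
  let F : Equiv.Perm (Fin N) → ∀ i : Fin N, Fin (i + 1) := fun π i =>
    ⟨code π i, Nat.lt_succ_of_le (lehmer_le _ _)⟩
  have hinj : F.Injective := fun π σ h => eq_of_code fun i hi => by
    have := congrFun h ⟨i, hi⟩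
    simpa [F] using this
  have hbij : F.Bijective := by
    refine (Fintype.bijective_iff_injective_and_card F).2 ⟨hinj, ?_⟩
    rw [Fintype.card_perm, Fintype.card_pi, Fintype.card_fin,
      ← Finset.prod_range_add_one_eq_factorial, Finset.prod_range]
    simp
  obtain ⟨π, hπ⟩ := hbij.2 fun i => ⟨w i, Nat.lt_succ_of_le (hl i)⟩
  refine ⟨π, funext fun i => ?_⟩
  by_cases hi : i < N
  · have := congrFun hπ ⟨i, hi⟩
    simpa [F] using this
  · rw [code_ge π (by omega), hN i (by omega)]

lemma avoids321_iff (π : Equiv.Perm (Fin N)) : Avoids321 π ↔ W321 (code π) := by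
  rw [code, w321_iff (seqOf_injective π)]
  constructor
  · rintro h i j k hij hjk ⟨h1, h2⟩
    have hk : k < N := by
      by_contra hk
      have := seqOf_ge π (not_lt.1 hk)
      have := seqOf_lt_iff π j
      have := seqOf_ge π (i := j)
      omega
    rw [seqOf_lt π hk, seqOf_lt π (by omega : j < N)] at h1
    rw [seqOf_lt π (by omega : j < N), seqOf_lt π (by omega : i < N)] at h2
    exact h ⟨⟨i, by omega⟩, ⟨j, by omega⟩, ⟨k, hk⟩, hij, hjk, h1, h2⟩
  · rintro h ⟨i, j, k, hij, hjk, h1, h2⟩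
    refine h i j k hij hjk ?_
    rw [seqOf_fin, seqOf_fin, seqOf_fin]
    exact ⟨h1, h2⟩

lemma avoids312_iff (π : Equiv.Perm (Fin N)) : Avoids312 π ↔ W312 (code π) := by
  rw [code, w312_iff (seqOf_injective π)]
  constructor
  · rintro h i j k hij hjk ⟨h1, h2⟩
    have hk : k < N := by
      by_contra hk
      have := seqOf_ge π (not_lt.1 hk)
      have := seqOf_lt_iff π i
      have := seqOf_ge π (i := i)
      omega
    rw [seqOf_lt π hk, seqOf_lt π (by omega : j < N)] at h1
    rw [seqOf_lt π hk, seqOf_lt π (by omega : i < N)] at h2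
    exact h ⟨⟨i, by omega⟩, ⟨j, by omega⟩, ⟨k, hk⟩, hij, hjk, h1, h2⟩
  · rintro h ⟨i, j, k, hij, hjk, h1, h2⟩
    refine h i j k hij hjk ?_
    rw [seqOf_fin, seqOf_fin, seqOf_fin]
    exact ⟨h1, h2⟩

lemma exists_image (π : {π : Equiv.Perm (Fin N) // Avoids321 ⇑π}) :
    ∃ σ : {π : Equiv.Perm (Fin N) // Avoids312 ⇑π}, code σ.1 = toW312 (code π.1) := by
  have hw := (avoids321_iff π.1).1 π.2
  obtain ⟨σ, hσ⟩ := exists_code (N := N) (w := toW312 (code π.1)) (dec312_leh _)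
    fun i hi => (toW312_rec_iff (lehmer_le _) hw i).1 (code_ge π.1 hi)
  exact ⟨⟨σ, (avoids312_iff σ).2 (hσ ▸ dec312_w312 _)⟩, hσ⟩

lemma exists_preimage (σ : {π : Equiv.Perm (Fin N) // Avoids312 ⇑π}) :
    ∃ π : {π : Equiv.Perm (Fin N) // Avoids321 ⇑π}, code σ.1 = toW312 (code π.1) := by
  have hw := (avoids312_iff σ.1).1 σ.2
  have hl : Leh (code σ.1) := lehmer_le _
  have hw' : W321 (toW321 (code σ.1)) := dec321_w321 (enc312_cat hl hw)
  obtain ⟨π, hπ⟩ := exists_code (N := N) (w := toW321 (code σ.1)) (dec321_leh _)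
    fun i hi => (toW312_rec_iff (dec321_leh _) hw' i).2 (by
      change toW312 (toW321 (code σ.1)) i = i
      rw [toW312_toW321 hl hw]; exact code_ge σ.1 hi)
  exact ⟨⟨π, (avoids321_iff π).2 (hπ ▸ hw')⟩, by rw [hπ, toW312_toW321 hl hw]⟩

end PrefixTree

open PrefixTree

/-- the prefix trees of the 321-avoiding and 312-avoiding games are isomorphic:
there is a bijection preserving the set of positions of left-to-right maxima and preserving
equality of `i`-th prefix flattenings. -/
theorem stmt16 {N : ℕ} (hN : 1 ≤ N) :
    ∃ f : {π : Equiv.Perm (Fin N) // Avoids321 ⇑π} ≃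
          {π : Equiv.Perm (Fin N) // Avoids312 ⇑π},
      (∀ π : {π : Equiv.Perm (Fin N) // Avoids321 ⇑π},
        ∀ m : Fin N, (IsLRMax ⇑π.1 m ↔ IsLRMax ⇑(f π).1 m)) ∧
      (∀ π π' : {π : Equiv.Perm (Fin N) // Avoids321 ⇑π}, ∀ i : ℕ, 1 ≤ i → ∀ h : i ≤ N,
        (PrefixEq ⇑π.1 ⇑π'.1 i h h ↔ PrefixEq ⇑(f π).1 ⇑(f π').1 i h h)) := by
  choose g hg using exists_image (N := N)
  have hl (π : Equiv.Perm (Fin N)) : Leh (code π) := lehmer_le _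
  have hw (π : {π : Equiv.Perm (Fin N) // Avoids321 ⇑π}) : W321 (code π.1) :=
    (avoids321_iff π.1).1 π.2
  have hpre (π π' : {π : Equiv.Perm (Fin N) // Avoids321 ⇑π}) (k : ℕ) :
      (∀ i < k, code π.1 i = code π'.1 i) ↔ ∀ i < k, code (g π).1 i = code (g π').1 i := by
    rw [hg, hg, toW312_congr_iff (hl _) (hw π) (hl _) (hw π')]
  have hbij : g.Bijective := by
    constructor
    · intro π π' h
      exact Subtype.ext (eq_of_code ((hpre π π' N).2 fun i _ => by rw [h]))
    · intro σ
      obtain ⟨π, hπ⟩ := exists_preimage σ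
      exact ⟨π, Subtype.ext (eq_of_code fun i _ => by rw [hg, hπ])⟩
  refine ⟨Equiv.ofBijective g hbij, fun π m => ?_, fun π π' i _ h => ?_⟩
  · rw [Equiv.ofBijective_apply, code_rec_iff, code_rec_iff, hg]
    exact toW312_rec_iff (hl _) (hw π) m
  · rw [Equiv.ofBijective_apply, Equiv.ofBijective_apply, prefixEq_iff, prefixEq_iff]
    exact hpre π π' i
end

section
/- For every N ≥ 1: (a) if π is a 213-avoiding permutation of size N and π_k is the maximum of π_1,…,π_k, then π_1 < π_2 < ⋯ < π_k; (b) for every 1 ≤ k ≤ N, the number of 213-avoiding permutations π of size N with π_1 < ⋯ < π_k equals the ballot number ((k+1)/(N+1))·binom(2N−k, N), and the number of those additionally satisfying π_k = N equals (k/N)·binom(2N−k−1, N−1); and (c) the maximum over all strategies s of the number of 213-avoiding permutations of size N won by s equals the Catalan number C_{N−1}, so the optimal probability of success is C_{N−1}/C_N, which tends to 1/4 as N → ∞. -/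
namespace Interview213

/-- The first `k` entries of `π` are increasing. -/
def IncPrefix {N : ℕ} (k : ℕ) (π : Fin N → Fin N) : Prop :=
  ∀ a b : Fin N, a < b → b.val < k → π a < π b

/-- The number of 213-avoiding permutations of size `N` whose first `k` entries increase. -/
noncomputable def prefixCount (N k : ℕ) : ℕ :=
  Nat.card {π : Equiv.Perm (Fin N) // Avoids213 ⇑π ∧ IncPrefix k ⇑π}

theorem increasing_of_max {N : ℕ} (π : Equiv.Perm (Fin N)) (hπ : Avoids213 ⇑π) (k : Fin N)
    (hk : ∀ m : Fin N, m ≤ k → π m ≤ π k) (a b : Fin N) (hab : a < b) (hb : b ≤ k) :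
    π a < π b := by
  by_contra hcon
  have hne : π b ≠ π a := fun h => hab.ne' (π.injective h)
  have hlt : π b < π a := lt_of_le_of_ne (not_lt.mp hcon) hne
  have hbk : b ≠ k := by
    rintro rfl
    exact absurd (hk a hab.le) (not_le.mpr hlt)
  have hbk' : b < k := lt_of_le_of_ne hb hbk
  have hak : π a < π k :=
    lt_of_le_of_ne (hk a (hab.trans hbk').le) fun h => (hab.trans hbk').ne (π.injective h)
  exact hπ ⟨a, b, k, hab, hbk', hlt, hak⟩

/-! ### Inserting the maximum -/

/-- The permutation of size `n + 1` obtained from `σ` by inserting the new maximum at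
position `p`. -/
def insertMax {n : ℕ} (p : Fin (n + 1)) (σ : Equiv.Perm (Fin n)) : Equiv.Perm (Fin (n + 1)) :=
  ((finSuccEquiv' p).trans (Equiv.optionCongr σ)).trans (finSuccEquiv' (Fin.last n)).symm

@[simp] theorem insertMax_self {n : ℕ} (p : Fin (n + 1)) (σ : Equiv.Perm (Fin n)) :
    insertMax p σ p = Fin.last n := by
  simp [insertMax]

@[simp] theorem insertMax_succAbove {n : ℕ} (p : Fin (n + 1)) (σ : Equiv.Perm (Fin n))
    (i : Fin n) : insertMax p σ (p.succAbove i) = (σ i).castSucc := by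
  simp [insertMax]

theorem insertMax_injective {n : ℕ} (p : Fin (n + 1)) :
    Function.Injective (insertMax p) := by
  intro σ τ h
  ext i
  have := congrArg (fun f : Equiv.Perm (Fin (n + 1)) => f (p.succAbove i)) h
  simpa [Fin.ext_iff] using this

theorem exists_insertMax {n : ℕ} (p : Fin (n + 1)) (π : Equiv.Perm (Fin (n + 1)))
    (h : π p = Fin.last n) : ∃ σ, insertMax p σ = π := by
  have hne : ∀ i, π (p.succAbove i) ≠ Fin.last n := fun i hi =>
    Fin.succAbove_ne p i (π.injective (hi.trans h.symm))
  let f : Fin n → Fin n := fun i => (π (p.succAbove i)).castPred (hne i)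
  have hf : Function.Injective f := by
    intro i j hij
    have : π (p.succAbove i) = π (p.succAbove j) := by
      simpa [f] using hij
    exact Fin.succAbove_right_injective (π.injective this)
  refine ⟨Equiv.ofBijective f (Finite.injective_iff_bijective.mp hf), ?_⟩
  ext x
  rcases Fin.eq_self_or_eq_succAbove p x with rfl | ⟨i, rfl⟩
  · simp [h]
  · simp [f]

theorem incPrefix_insertMax {n : ℕ} (p : Fin (n + 1)) (σ : Equiv.Perm (Fin n)) :
    IncPrefix (p.val + 1) ⇑(insertMax p σ) ↔ IncPrefix p.val ⇑σ := by
  constructor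
  · intro h a b hab hb
    have h1 := h (p.succAbove a) (p.succAbove b) (Fin.succAbove_lt_succAbove_iff.mpr hab) (by
      rw [Fin.succAbove_of_castSucc_lt p b (by simpa [Fin.lt_def] using hb)]
      simp; omega)
    simpa using h1
  · intro h a b hab hb
    have hane : a ≠ p := by
      rintro rfl
      have := Fin.lt_def.mp hab
      omega
    rcases Fin.eq_self_or_eq_succAbove p a with rfl | ⟨a, rfl⟩
    · exact absurd rfl hane
    rcases Fin.eq_self_or_eq_succAbove p b with rfl | ⟨b, rfl⟩
    · simp [Fin.castSucc_lt_last]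
    · have hb' : b.val < p.val := by
        by_contra hcon
        rw [Fin.succAbove_of_le_castSucc p b (by simpa [Fin.le_def] using hcon)] at hb
        simp at hb
        omega
      have := h a b (Fin.succAbove_lt_succAbove_iff.mp hab) hb'
      simpa using this

theorem avoids_of_insertMax {n : ℕ} (p : Fin (n + 1)) (σ : Equiv.Perm (Fin n))
    (h : Avoids213 ⇑(insertMax p σ)) : Avoids213 ⇑σ := by
  rintro ⟨i, j, l, hij, hjl, h1, h2⟩
  exact h ⟨p.succAbove i, p.succAbove j, p.succAbove l, Fin.succAbove_lt_succAbove_iff.mpr hij,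
    Fin.succAbove_lt_succAbove_iff.mpr hjl, by simpa using h1, by simpa using h2⟩

theorem avoids_insertMax {n : ℕ} (p : Fin (n + 1)) (σ : Equiv.Perm (Fin n))
    (h : Avoids213 ⇑σ) (hinc : IncPrefix p.val ⇑σ) : Avoids213 ⇑(insertMax p σ) := by
  rintro ⟨i, j, l, hij, hjl, h1, h2⟩
  rcases Fin.eq_self_or_eq_succAbove p i with rfl | ⟨i, rfl⟩
  · rw [insertMax_self] at h2
    exact absurd (Fin.le_last _) (not_le.mpr h2)
  rcases Fin.eq_self_or_eq_succAbove p l with rfl | ⟨l, rfl⟩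
  · exact absurd ((incPrefix_insertMax l σ).mpr hinc _ _ hij (by
      have := Fin.lt_def.mp hjl
      omega)) (not_lt.mpr h1.le)
  rcases Fin.eq_self_or_eq_succAbove p j with rfl | ⟨j, rfl⟩
  · rw [insertMax_self] at h1
    exact absurd (Fin.le_last _) (not_le.mpr h1)
  exact h ⟨i, j, l, Fin.succAbove_lt_succAbove_iff.mp hij, Fin.succAbove_lt_succAbove_iff.mp hjl,
    by simpa using h1, by simpa using h2⟩

/-- Deleting the maximum from position `p` identifies the 213-avoiders of size `n + 1` with an
increasing prefix ending in the maximum at `p` with the 213-avoiders of size `n` whose first `p`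
entries increase (positions are 0-indexed). -/
theorem card_prefix_max {n : ℕ} (p : Fin (n + 1)) :
    Nat.card {π : Equiv.Perm (Fin (n + 1)) // Avoids213 ⇑π ∧ IncPrefix (p.val + 1) ⇑π ∧
      π p = Fin.last n} = prefixCount n p.val := by
  symm
  refine Nat.card_eq_of_bijective
    (fun σ => ⟨insertMax p σ.1, avoids_insertMax p σ.1 σ.2.1 σ.2.2,
      (incPrefix_insertMax p σ.1).mpr σ.2.2, insertMax_self p σ.1⟩) ⟨?_, ?_⟩
  · intro σ τ h
    exact Subtype.ext (insertMax_injective p (congrArg Subtype.val h))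
  · rintro ⟨π, h1, h2, h3⟩
    obtain ⟨σ, rfl⟩ := exists_insertMax p π h3
    exact ⟨⟨σ, avoids_of_insertMax p σ h1, (incPrefix_insertMax p σ).mp h2⟩, rfl⟩

/-! ### The ballot recurrence -/

theorem card_split {α : Type*} [Finite α] (P Q : α → Prop) :
    Nat.card {x // P x} = Nat.card {x // P x ∧ Q x} + Nat.card {x // P x ∧ ¬ Q x} := by
  classical
  have := Fintype.ofFinite α
  simp only [Nat.card_eq_fintype_card, Fintype.card_subtype]
  rw [← Finset.card_filter_add_card_filter_not (s := Finset.univ.filter P) Q,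
    Finset.filter_filter, Finset.filter_filter]

/-- A 213-avoider whose first `p + 1` entries increase has an increasing prefix of length `p + 2`
unless the entry at the (0-indexed) position `p` is the maximum. -/
theorem prefix_stops_iff {n : ℕ} (π : Equiv.Perm (Fin (n + 1))) (hπ : Avoids213 ⇑π)
    (p : Fin (n + 1)) (hp : p.val < n) (hinc : IncPrefix (p.val + 1) ⇑π) :
    ¬ IncPrefix (p.val + 2) ⇑π ↔ π p = Fin.last n := by
  let q : Fin (n + 1) := ⟨p.val + 1, by omega⟩
  have hpq : p < q := by simp [q, Fin.lt_def]
  constructor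
  · intro h
    have hdesc : π q < π p := by
      by_contra hcon
      have hlt : π p < π q :=
        lt_of_le_of_ne (not_lt.mp hcon) fun e => hpq.ne (π.injective e)
      apply h
      intro a b hab hb
      by_cases hb' : b.val < p.val + 1
      · exact hinc a b hab hb'
      · have hbq : b = q := Fin.ext (by simp [q]; omega)
        subst hbq
        have hap : a.val ≤ p.val := by
          have : a.val < p.val + 1 := hab
          omega
        rcases eq_or_lt_of_le hap with e | e
        · rw [Fin.ext e]; exact hlt
        · exact (hinc a p e (by omega)).trans hlt
    by_contra hne
    -- `m` is the position of the maximum; it can lie neither before, at, nor after `p`.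
    obtain ⟨m, hm⟩ := π.surjective (Fin.last n)
    rcases lt_trichotomy m p with hmp | rfl | hmp
    · have := hinc m p hmp (by omega)
      rw [hm] at this
      exact absurd (Fin.le_last _) (not_le.mpr this)
    · exact hne hm
    · have hpm : π p < π m := by rw [hm]; exact Fin.lt_last_iff_ne_last.mpr hne
      have hqm : q < m := by
        refine lt_of_le_of_ne ?_ ?_
        · have := Fin.lt_def.mp hmp
          simp [q, Fin.le_def]; omega
        · intro e
          rw [← e] at hpm
          exact absurd hpm (not_lt.mpr hdesc.le)
      exact hπ ⟨p, q, m, hpq, hqm, hdesc, hpm⟩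
  · intro h hcon
    have := hcon p q hpq (by simp [q])
    rw [h] at this
    exact absurd (Fin.le_last _) (not_le.mpr this)

theorem prefixCount_succ {n j : ℕ} (hj : j < n) :
    prefixCount (n + 1) (j + 1) = prefixCount (n + 1) (j + 2) + prefixCount n j := by
  have h := card_prefix_max (n := n) ⟨j, by omega⟩
  rw [← h]
  unfold prefixCount
  rw [card_split _ (fun π : Equiv.Perm (Fin (n + 1)) => IncPrefix (j + 2) ⇑π)]
  congr 1
  · refine Nat.card_congr (Equiv.subtypeEquivRight fun π => ?_)
    constructor
    · rintro ⟨⟨h1, -⟩, h2⟩; exact ⟨h1, h2⟩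
    · rintro ⟨h1, h2⟩
      exact ⟨⟨h1, fun a b hab hb => h2 a b hab (by omega)⟩, h2⟩
  · refine Nat.card_congr (Equiv.subtypeEquivRight fun π => ?_)
    constructor
    · rintro ⟨⟨h1, h2⟩, h3⟩
      exact ⟨h1, h2, (prefix_stops_iff π h1 ⟨j, by omega⟩ hj h2).mp h3⟩
    · rintro ⟨h1, h2, h3⟩
      exact ⟨⟨h1, h2⟩, (prefix_stops_iff π h1 ⟨j, by omega⟩ hj h2).mpr h3⟩

theorem prefixCount_self (n : ℕ) : prefixCount n n = 1 := by
  unfold prefixCount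
  rw [Nat.card_eq_one_iff_unique]
  refine ⟨⟨?_⟩, ⟨⟨1, ?_, ?_⟩⟩⟩
  · rintro ⟨π, -, h⟩ ⟨τ, -, h'⟩
    have h1 : StrictMono ⇑π := fun a b hab => h a b hab b.isLt
    have h2 : StrictMono ⇑τ := fun a b hab => h' a b hab b.isLt
    apply Subtype.ext
    apply DFunLike.coe_injective
    exact (h1.range_inj h2).mp (by rw [π.surjective.range_eq, τ.surjective.range_eq])
  · rintro ⟨i, j, k, hij, -, hji, -⟩
    exact absurd hij (not_lt.mpr hji.le)
  · intro a b hab _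
    exact hab

theorem prefixCount_zero (n : ℕ) : prefixCount n 0 = prefixCount n 1 := by
  refine Nat.card_congr (Equiv.subtypeEquivRight fun π => and_congr_right fun _ => ?_)
  constructor
  · intro _ a b hab hb
    have := Fin.lt_def.mp hab
    omega
  · intro _ a b _ hb
    omega

theorem prefixCount_le (n k : ℕ) : prefixCount n k ≤ prefixCount n 0 := by
  refine Nat.card_le_card_of_injective
    (fun π => ⟨π.1, π.2.1, fun a b _ hb => absurd hb (Nat.not_lt_zero _)⟩) ?_
  intro π τ h
  exact Subtype.ext (by simpa using h)

theorem prefixCount_formula (N : ℕ) : ∀ k ≤ N,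
    prefixCount N k * (N + 1) = (k + 1) * Nat.choose (2 * N - k) N := by
  induction N with
  | zero =>
    intro k hk
    obtain rfl : k = 0 := by omega
    simp [prefixCount_self]
  | succ N ih =>
    -- Downward induction on `k`, through `d = N + 1 - k`.
    suffices H : ∀ d k, k + d = N + 1 →
        prefixCount (N + 1) k * (N + 1 + 1) = (k + 1) * Nat.choose (2 * (N + 1) - k) (N + 1) from
      fun k hk => H (N + 1 - k) k (by omega)
    intro d
    induction d with
    | zero =>
      intro k hk
      obtain rfl : k = N + 1 := by omega
      rw [prefixCount_self, show 2 * (N + 1) - (N + 1) = N + 1 by omega, Nat.choose_self]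
      ring
    | succ d ihd =>
      intro k hk
      have h1 := ihd (k + 1) (by omega)
      rcases k with _ | j
      · rw [prefixCount_zero, h1, show 2 * (N + 1) - (0 + 1) = 2 * N + 1 by omega,
          show 2 * (N + 1) - 0 = 2 * N + 1 + 1 by omega, Nat.choose_succ_succ (2 * N + 1) N,
          Nat.choose_symm_half]
        ring
      · have h2 := ih j (by omega)
        rw [prefixCount_succ (by omega)]
        obtain ⟨e, rfl⟩ : ∃ e, N = j + e := ⟨N - j, by omega⟩
        have h3 := Nat.choose_succ_right_eq (2 * (j + e) - j) (j + e)
        rw [show 2 * (j + e) - j - (j + e) = e by omega] at h3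
        rw [show 2 * (j + e + 1) - (j + 1 + 1) = 2 * (j + e) - j by omega] at h1
        rw [show 2 * (j + e + 1) - (j + 1) = 2 * (j + e) - j + 1 by omega,
          Nat.choose_succ_succ]
        apply Nat.eq_of_mul_eq_mul_right (show 0 < j + e + 1 by omega)
        simp only [Nat.succ_eq_add_one]
        zify at h1 h2 h3 ⊢
        linear_combination (j + e + 1 : ℤ) * h1 + (j + e + 2 : ℤ) * h2 + h3

theorem prefixCount_zero_eq_catalan (n : ℕ) : prefixCount n 0 = catalan n := by
  have h := prefixCount_formula n 0 (Nat.zero_le _)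
  have h2 := succ_mul_catalan_eq_centralBinom n
  rw [Nat.centralBinom_eq_two_mul_choose] at h2
  apply Nat.eq_of_mul_eq_mul_left (Nat.succ_pos n)
  rw [Nat.succ_eq_add_one, h2, mul_comm, h]
  simp

/-! ### Strategies -/

/-- The flattening of an increasing prefix depends only on its length. -/
theorem flatten_eq_of_incPrefix {N j : ℕ} (π τ : Fin N → Fin N) (hj : j ≤ N)
    (hπ : IncPrefix j π) (hτ : IncPrefix j τ) : flatten π hj = flatten τ hj := by
  have key : ∀ ρ : Fin N → Fin N, IncPrefix j ρ → ∀ a b : Fin j,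
      (ρ (Fin.castLE hj b) < ρ (Fin.castLE hj a) ↔ b < a) := by
    intro ρ hρ a b
    constructor
    · intro h
      by_contra hcon
      rcases eq_or_lt_of_le (not_lt.mp hcon) with e | e
      · rw [e] at h
        exact lt_irrefl _ h
      · exact absurd (hρ (Fin.castLE hj a) (Fin.castLE hj b) e b.isLt) (not_lt.mpr h.le)
    · intro h
      exact hρ (Fin.castLE hj b) (Fin.castLE hj a) h a.isLt
  funext a
  simp only [flatten, key π hπ, key τ hτ]

theorem incPrefix_of_max {n : ℕ} (π : Equiv.Perm (Fin (n + 1))) (hπ : Avoids213 ⇑π)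
    (p : Fin (n + 1)) (hp : π p = Fin.last n) : IncPrefix (p.val + 1) ⇑π := by
  intro a b hab hb
  refine increasing_of_max π hπ p (fun m _ => by rw [hp]; exact Fin.le_last _) a b hab ?_
  rw [Fin.le_def]
  omega

/-- If `s` stops on `π` at `i` and on `τ` at `j`, both at the end of an increasing prefix, then
`j ≤ i`: otherwise the length-`i` flattenings agree, and `s` would already stop on `τ` at `i`.
By symmetry, `s` wins all the 213-avoiders it wins at the same position. -/
theorem stop_le {n : ℕ} (s : Strategy) (π τ : Equiv.Perm (Fin (n + 1))) {i j : ℕ}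
    (hi : StopsAt s ⇑π i) (hj : StopsAt s ⇑τ j) (hπ : IncPrefix i ⇑π) (hτ : IncPrefix j ⇑τ) :
    j ≤ i := by
  by_contra hcon
  obtain ⟨hi1, hiN, hi2, -⟩ := hi
  obtain ⟨-, hjN, -, hj3⟩ := hj
  have h := hj3 i hi1 (by omega) hiN
  rw [← flatten_eq_of_incPrefix (⇑π) (⇑τ) hiN hπ
    (fun a b hab hb => hτ a b hab (by omega))] at h
  rcases hi2 with h' | h'
  · rw [h] at h'
    exact Bool.noConfusion h'
  · omega

/-- The position of a win, 0-indexed, together with what part (a) says about it. -/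
theorem exists_of_wins {n : ℕ} (s : Strategy) (π : Equiv.Perm (Fin (n + 1)))
    (hπ : Avoids213 ⇑π) (h : Wins s ⇑π) : ∃ p : Fin (n + 1),
      StopsAt s ⇑π (p.val + 1) ∧ IncPrefix (p.val + 1) ⇑π ∧ π p = Fin.last n := by
  obtain ⟨i, hi, h1, h2, h3⟩ := h
  obtain ⟨i, rfl⟩ : ∃ i', i = i' + 1 := ⟨i - 1, by have := hi.1; omega⟩
  exact ⟨⟨i, h1⟩, hi, incPrefix_of_max π hπ ⟨i, h1⟩ h3, h3⟩

theorem card_wins_le {n : ℕ} (s : Strategy) :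
    Nat.card {π : Equiv.Perm (Fin (n + 1)) // Avoids213 ⇑π ∧ Wins s ⇑π} ≤ catalan n := by
  by_cases hex : ∃ π : Equiv.Perm (Fin (n + 1)), Avoids213 ⇑π ∧ Wins s ⇑π
  · obtain ⟨τ, hτ, hw⟩ := hex
    obtain ⟨p, hp1, hp2, -⟩ := exists_of_wins s τ hτ hw
    rw [← prefixCount_zero_eq_catalan]
    refine le_trans ?_ (prefixCount_le n p.val)
    rw [← card_prefix_max p]
    have key : ∀ π : Equiv.Perm (Fin (n + 1)), Avoids213 ⇑π ∧ Wins s ⇑π →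
        Avoids213 ⇑π ∧ IncPrefix (p.val + 1) ⇑π ∧ π p = Fin.last n := by
      rintro π ⟨hπ, hw'⟩
      obtain ⟨q, hq1, hq2, hq3⟩ := exists_of_wins s π hπ hw'
      have h1 := stop_le s π τ hq1 hp1 hq2 hp2
      have h2 := stop_le s τ π hp1 hq1 hp2 hq2
      obtain rfl : p = q := Fin.ext (by omega)
      exact ⟨hπ, hq2, hq3⟩
    refine Nat.card_le_card_of_injective (fun π => ⟨π.1, key π.1 π.2⟩) ?_
    intro π ρ h
    exact Subtype.ext (by simpa using h)
  · have : IsEmpty {π : Equiv.Perm (Fin (n + 1)) // Avoids213 ⇑π ∧ Wins s ⇑π} :=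
      ⟨fun π => hex ⟨π.1, π.2⟩⟩
    simp

theorem card_wins_first (n : ℕ) :
    Nat.card {π : Equiv.Perm (Fin (n + 1)) // Avoids213 ⇑π ∧ Wins (fun _ _ => true) ⇑π} =
      catalan n := by
  rw [← prefixCount_zero_eq_catalan]
  refine Eq.trans ?_ (card_prefix_max (0 : Fin (n + 1)))
  refine Nat.card_congr (Equiv.subtypeEquivRight fun π => ?_)
  constructor
  · rintro ⟨hπ, hw⟩
    obtain ⟨q, hq1, hq2, hq3⟩ := exists_of_wins _ π hπ hw
    have hq0 : q = 0 := by
      by_contra hne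
      have hpos : 0 < q.val := Nat.pos_of_ne_zero fun h => hne (Fin.ext h)
      have := hq1.2.2.2 1 le_rfl (by omega) (by omega)
      exact Bool.noConfusion this
    rw [hq0] at hq2 hq3
    exact ⟨hπ, hq2, hq3⟩
  · rintro ⟨hπ, -, h⟩
    refine ⟨hπ, 1, ⟨le_rfl, by omega, Or.inl rfl, fun j _ _ => by omega⟩, by omega, by omega, ?_⟩
    exact h

/-! ### The limit -/

theorem catalan_ratio (n : ℕ) :
    (catalan n : ℝ) / (catalan (n + 1) : ℝ) = 1 / 4 + (3 / 8) * (1 / ((n : ℝ) + 1 / 2)) := by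
  have h1 := succ_mul_catalan_eq_centralBinom n
  have h2 := succ_mul_catalan_eq_centralBinom (n + 1)
  have h3 := Nat.succ_mul_centralBinom_succ n
  rw [← h1, ← h2] at h3
  have h4 : (n + 2) * catalan (n + 1) = 2 * (2 * n + 1) * catalan n := by
    apply Nat.eq_of_mul_eq_mul_left (Nat.succ_pos n)
    simp only [Nat.succ_eq_add_one]
    linarith
  have hpos : 0 < catalan (n + 1) := by
    rcases Nat.eq_zero_or_pos (catalan (n + 1)) with h | h
    · rw [h] at h2
      have := Nat.centralBinom_pos (n + 1)
      omega
    · exact h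
  have hposR : (0 : ℝ) < catalan (n + 1) := by exact_mod_cast hpos
  have h5 : ((n : ℝ) + 2) * catalan (n + 1) = 2 * (2 * n + 1) * catalan n := by exact_mod_cast h4
  have hn : (0 : ℝ) < (n : ℝ) + 1 / 2 := by positivity
  rw [div_eq_iff hposR.ne']
  field_simp
  linarith

theorem tendsto_catalan_ratio :
    Filter.Tendsto (fun N : ℕ => (catalan (N - 1) : ℝ) / (catalan N : ℝ))
      Filter.atTop (nhds (1 / 4)) := by
  rw [← Filter.tendsto_add_atTop_iff_nat 1]
  simp only [Nat.add_sub_cancel, catalan_ratio]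
  have h : Filter.Tendsto (fun n : ℕ => 1 / ((n : ℝ) + 1 / 2)) Filter.atTop (nhds 0) := by
    simp only [one_div]
    exact tendsto_inv_atTop_zero.comp
      (Filter.tendsto_atTop_add_const_right _ _ tendsto_natCast_atTop_atTop)
  simpa using (h.const_mul (3 / 8 : ℝ)).const_add (1 / 4 : ℝ)

end Interview213

/-- for the 213-avoiding interviews: (a) any prefix ending in a left-to-right
maximum is increasing; (b) the number of 213-avoiding permutations of size `N` with
increasing length-`k` prefix is the ballot number `((k+1)/(N+1))·choose(2N-k, N)`, and the
number of those with the maximum at position `k` is `(k/N)·choose(2N-k-1, N-1)` (both in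
cleared-denominator form); (c) the maximum number of wins over all strategies is `C_{N-1}`,
and `C_{N-1}/C_N → 1/4`. -/
theorem stmt19 :
    (∀ N : ℕ, ∀ hN : 1 ≤ N,
      (∀ π : Equiv.Perm (Fin N), Avoids213 ⇑π → ∀ k : Fin N,
        (∀ m : Fin N, m ≤ k → π m ≤ π k) →
        ∀ a b : Fin N, a < b → b ≤ k → π a < π b) ∧
      (∀ k : ℕ, ∀ hk1 : 1 ≤ k, ∀ hkN : k ≤ N,
        Nat.card {π : Equiv.Perm (Fin N) // Avoids213 ⇑π ∧
            ∀ a b : Fin N, a < b → b.val < k → π a < π b} * (N + 1) =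
          (k + 1) * Nat.choose (2 * N - k) N ∧
        Nat.card {π : Equiv.Perm (Fin N) // Avoids213 ⇑π ∧
            (∀ a b : Fin N, a < b → b.val < k → π a < π b) ∧
            π ⟨k - 1, by omega⟩ = ⟨N - 1, by omega⟩} * N =
          k * Nat.choose (2 * N - k - 1) (N - 1)) ∧
      IsGreatest {n : ℕ | ∃ s : Strategy,
          n = Nat.card {π : Equiv.Perm (Fin N) // Avoids213 ⇑π ∧ Wins s ⇑π}}
        (catalan (N - 1))) ∧
    Filter.Tendsto (fun N : ℕ => (catalan (N - 1) : ℝ) / (catalan N : ℝ))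
      Filter.atTop (nhds (1 / 4)) := by
  refine ⟨fun N hN => ⟨?_, ?_, ?_, ?_⟩, Interview213.tendsto_catalan_ratio⟩
  · exact fun π hπ k hk a b hab hb => Interview213.increasing_of_max π hπ k hk a b hab hb
  · intro k hk1 hkN
    refine ⟨Interview213.prefixCount_formula N k hkN, ?_⟩
    obtain ⟨n, rfl⟩ : ∃ n, N = n + 1 := ⟨N - 1, by omega⟩
    obtain ⟨j, rfl⟩ : ∃ j, k = j + 1 := ⟨k - 1, by omega⟩
    have h := Interview213.prefixCount_formula n j (by omega)
    rw [← Interview213.card_prefix_max ⟨j, by omega⟩] at h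
    rw [show 2 * (n + 1) - (j + 1) - 1 = 2 * n - j by omega]
    exact h
  · obtain ⟨n, rfl⟩ : ∃ n, N = n + 1 := ⟨N - 1, by omega⟩
    exact ⟨fun _ _ => true, (Interview213.card_wins_first n).symm⟩
  · obtain ⟨n, rfl⟩ : ∃ n, N = n + 1 := ⟨N - 1, by omega⟩
    rintro m ⟨s, rfl⟩
    exact Interview213.card_wins_le s
end
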